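/- arXiv:2209.03852 — 2 statements merged into one kernel-verified Lean document; each statement's English description precedes it below -/
import Mathlib

section
/- Let H²_β be a weighted Hardy space of polynomial growth. If ψ is analytic on an open neighborhood of the closed unit disk 𝔻̄ and ψ(𝔻) ⊆ 𝔻, then the composition operator C_ψ is bounded on H²_β. -/
noncomputable section

open Complex Filter Topology

/-- The sequence-space (ℓ²) model of a weighted Hardy space `H²_β`.
An element `a : H2` represents the analytic function whose `k`-th Taylor
coefficient is `a k / β k` (so that `‖a‖` is exactly the `H²_β`-norm). -/
abbrev H2 : Type := lp (fun _ : ℕ => ℂ) 2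

/-- The direct sum (ℓ²-sense) of `m` copies of `H2`. -/
abbrev Hm (m : ℕ) : Type := PiLp 2 (fun _ : Fin m => H2)

/-- The open unit disk 𝔻 ⊆ ℂ. -/
def unitDisk : Set ℂ := Metric.ball 0 1

/-- `β_0 = 1` and `β_k = ∏_{j=1}^k w_j`. -/
def betaSeq (w : ℕ → ℝ) (k : ℕ) : ℝ := ∏ j ∈ Finset.Icc 1 k, w j

/-- The analytic function on 𝔻 represented by the vector `a` in the model of `H²_β`:
`f(z) = ∑_k (a k / β k) z^k`. -/
def repFun (β : ℕ → ℝ) (a : H2) (z : ℂ) : ℂ := ∑' k, (a k / (β k : ℂ)) * z ^ k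

/-- `T` is (the ℓ²-model of) the multiplication operator `M_g` on `H²_β`.
Existence of such a `T` says precisely that `M_g` is bounded on `H²_β`. -/
def RepMul (β : ℕ → ℝ) (g : ℂ → ℂ) (T : H2 →L[ℂ] H2) : Prop :=
  ∀ a : H2, ∀ z ∈ unitDisk, repFun β (T a) z = g z * repFun β a z

/-- `T` is (the ℓ²-model of) the composition operator `C_ψ` on `H²_β`.
Existence of such a `T` says precisely that `C_ψ` is bounded on `H²_β`. -/
def RepComp (β : ℕ → ℝ) (ψ : ℂ → ℂ) (T : H2 →L[ℂ] H2) : Prop :=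
  ∀ a : H2, ∀ z ∈ unitDisk, repFun β (T a) z = repFun β a (ψ z)

/-- The Möbius factor `φ_{z₀}(z) = (z₀ - z)/(1 - conj z₀ · z)`. -/
def mobius (z₀ z : ℂ) : ℂ := (z₀ - z) / (1 - (starRingEnd ℂ) z₀ * z)

/-- `φ` belongs to `Aut(𝔻)`, i.e. `φ(z) = e^{iθ}(z₀ - z)/(1 - conj z₀ · z)`. -/
def IsDiskAut (φ : ℂ → ℂ) : Prop :=
  ∃ (θ : ℝ) (z₀ : ℂ), z₀ ∈ unitDisk ∧
    ∀ z, φ z = Complex.exp (θ * Complex.I) * mobius z₀ z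

/-- `B` is a finite Blaschke product of order `m`. -/
def IsBlaschke (m : ℕ) (B : ℂ → ℂ) : Prop :=
  ∃ (θ : ℝ) (zs : Fin m → ℂ), (∀ j, zs j ∈ unitDisk) ∧
    ∀ z, B z = Complex.exp (θ * Complex.I) * ∏ j, mobius (zs j) z

/-- `w` is a positive weight sequence tending to `1` such that the weighted Hardy
space `H²_β` is of polynomial growth: `sup_k (k+1)|w_k - 1| < ∞`. -/
def PolyGrowth (w : ℕ → ℝ) : Prop :=
  (∀ k, 1 ≤ k → 0 < w k) ∧ Tendsto w atTop (nhds 1) ∧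
    ∃ M : ℝ, ∀ k : ℕ, 1 ≤ k → ((k : ℝ) + 1) * |w k - 1| ≤ M

/-- `f` is analytic on an open neighbourhood of the closed unit disk. -/
def AnalyticOnClosedDisk (f : ℂ → ℂ) : Prop :=
  ∃ U : Set ℂ, IsOpen U ∧ Metric.closedBall (0:ℂ) 1 ⊆ U ∧ AnalyticOnNhd ℂ f U


lemma aux_subord (f : ℂ → ℂ) (hf : Differentiable ℂ f) (w : ℂ) (hw : w ∈ Metric.ball (0:ℂ) 1) :
    ‖f w‖^2 ≤ Real.circleAverage ((Complex.re ∘ herglotzRieszKernel 0 w) • (fun z => ‖f z‖^2)) 0 1 := by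
  have hk := continuousOn_herglotzRieszKernel_sphere (c := 0) (R := 1) hw
  rw [abs_one] at hk
  have hkre : ContinuousOn (Complex.re ∘ herglotzRieszKernel 0 w) (Metric.sphere 0 1) :=
    Complex.continuous_re.comp_continuousOn hk
  set G : ℂ → ℂ := fun t => 2 * (starRingEnd ℂ (f w)) * f t - (‖f w‖^2 : ℝ) with hG
  have hGd : Differentiable ℂ G := by fun_prop
  have hGc := hGd.continuous
  have h1 := DiffContOnCl.circleAverage_re_herglotzRieszKernel_smul (f := G) hGd.diffContOnCl hw
  have hint : CircleIntegrable ((re ∘ herglotzRieszKernel 0 w) • G) 0 1 := by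
    apply ContinuousOn.circleIntegrable zero_le_one
    exact hkre.smul hGc.continuousOn
  have h2 := Complex.reCLM.circleAverage_comp_comm hint
  rw [h1] at h2
  have h3 : (G w).re = ‖f w‖^2 := by
    have : G w = ((‖f w‖^2 : ℝ) : ℂ) := by
      simp only [hG]
      rw [mul_assoc, mul_comm (starRingEnd ℂ (f w)), Complex.mul_conj, Complex.normSq_eq_norm_sq]
      push_cast; ring
    rw [this, Complex.ofReal_re]
  have h4 : Complex.reCLM (G w) = ‖f w‖^2 := h3
  rw [← h4, ← h2]
  apply Real.circleAverage_mono
  · apply ContinuousOn.circleIntegrable zero_le_one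
    exact Complex.continuous_re.comp_continuousOn (hkre.smul hGc.continuousOn)
  · apply ContinuousOn.circleIntegrable zero_le_one
    exact hkre.smul (by have := hf.continuous; fun_prop)
  · intro t ht
    rw [abs_one] at ht
    have hpos : 0 ≤ (herglotzRieszKernel 0 w t).re := by
      refine le_trans ?_ (le_re_herglotzRieszKernel ht hw)
      have : ‖w‖ < 1 := by simpa using hw
      apply div_nonneg <;> simp <;> linarith [norm_nonneg w]
    have hin : (G t).re ≤ ‖f t‖^2 := by
      have h0 := sq_nonneg ‖f t - f w‖
      rw [← Complex.normSq_eq_norm_sq, Complex.normSq_sub, Complex.normSq_eq_norm_sq, Complex.normSq_eq_norm_sq] at h0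
      simp only [hG, Complex.sub_re, Complex.ofReal_re]
      have : (2 * (starRingEnd ℂ (f w)) * f t).re = 2 * (f t * (starRingEnd ℂ) (f w)).re := by
        simp [Complex.mul_re]; ring
      rw [this]; linarith
    simpa [Complex.mul_re] using mul_le_mul_of_nonneg_left hin hpos

lemma aux_little (f : ℂ → ℂ) (hf : Differentiable ℂ f) (ψ : ℂ → ℂ)
    (hψ : DifferentiableOn ℂ ψ (Metric.ball 0 1)) (hm : Set.MapsTo ψ (Metric.ball 0 1) (Metric.ball 0 1))
    (r : ℝ) (hr : 0 < r) (hr1 : r < 1) :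
    Real.circleAverage (fun z => ‖f (ψ z)‖^2) 0 r ≤ (1 + ‖ψ 0‖) / (1 - ‖ψ 0‖) *
      Real.circleAverage (fun z => ‖f z‖^2) 0 1 := by
  have hfc := hf.continuous
  set H : ℂ → ℂ := fun w => Real.circleAverage (fun ζ ↦ herglotzRieszKernel 0 w ζ • ((‖f ζ‖^2 : ℝ) : ℂ)) 0 1 with hH
  have hg : CircleIntegrable (fun z => ‖f z‖^2) 0 1 :=
    ContinuousOn.circleIntegrable zero_le_one (by fun_prop)
  have hgc : CircleIntegrable (fun z => ((‖f z‖^2 : ℝ) : ℂ)) 0 1 :=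
    ContinuousOn.circleIntegrable zero_le_one (by fun_prop)
  have hHd : DifferentiableOn ℂ H (Metric.ball 0 1) :=
    differentiableOn_circleAverage_herglotzRieszKernel_smul hgc
  have hHre : ∀ w ∈ Metric.ball (0:ℂ) 1, (H w).re =
      Real.circleAverage ((Complex.re ∘ herglotzRieszKernel 0 w) • (fun z => ‖f z‖^2)) 0 1 :=
    fun w hw => re_circleAverage_herglotzRieszKernel_smul hg hw
  have hsub : Metric.closedBall (0:ℂ) r ⊆ Metric.ball 0 1 := Metric.closedBall_subset_ball hr1
  have hHψ : DifferentiableOn ℂ (H ∘ ψ) (Metric.closedBall 0 r) := (hHd.comp hψ hm).mono hsub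
  have hmean : Real.circleAverage (H ∘ ψ) 0 r = H (ψ 0) := by
    apply DiffContOnCl.circleAverage
    rw [abs_of_pos hr]
    exact DifferentiableOn.diffContOnCl (by rwa [closure_ball _ hr.ne'])
  have hss : Metric.sphere (0:ℂ) r ⊆ Metric.closedBall 0 r := Metric.sphere_subset_closedBall
  have hint : CircleIntegrable (H ∘ ψ) 0 r :=
    ContinuousOn.circleIntegrable hr.le (hHψ.continuousOn.mono hss)
  have h2 := Complex.reCLM.circleAverage_comp_comm hint
  rw [hmean] at h2
  have h0 : ψ 0 ∈ Metric.ball (0:ℂ) 1 := hm (by simp)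
  have hψc : ContinuousOn ψ (Metric.sphere 0 r) := hψ.continuousOn.mono (hss.trans hsub)
  calc Real.circleAverage (fun z => ‖f (ψ z)‖^2) 0 r 
      ≤ Real.circleAverage (Complex.reCLM ∘ (H ∘ ψ)) 0 r := by
        apply Real.circleAverage_mono
        · apply ContinuousOn.circleIntegrable hr.le
          exact ((hfc.comp_continuousOn hψc).norm).pow 2
        · apply ContinuousOn.circleIntegrable hr.le
          exact Complex.continuous_re.comp_continuousOn (hHψ.continuousOn.mono hss)
        · intro z hz
          rw [abs_of_pos hr] at hz
          have hz' := hm (hsub (hss hz))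
          show _ ≤ (H (ψ z)).re
          rw [hHre _ hz']
          exact aux_subord f hf _ hz'
    _ = (H (ψ 0)).re := h2
    _ ≤ Real.circleAverage (((1 + ‖ψ 0‖) / (1 - ‖ψ 0‖)) • (fun z => ‖f z‖^2)) 0 1 := by
        rw [hHre _ h0]
        have hk := continuousOn_herglotzRieszKernel_sphere (c := 0) (R := 1) h0
        rw [abs_one] at hk
        apply Real.circleAverage_mono
        · apply ContinuousOn.circleIntegrable zero_le_one
          exact (Complex.continuous_re.comp_continuousOn hk).smul (by fun_prop)
        · apply ContinuousOn.circleIntegrable zero_le_one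
          exact Continuous.continuousOn (by fun_prop)
        · intro t ht
          rw [abs_one] at ht
          have := re_herglotzRieszKernel_le ht h0
          simp only [Pi.smul_apply', Pi.smul_apply, smul_eq_mul]
          apply mul_le_mul_of_nonneg_right _ (by positivity)
          simpa [herglotzRieszKernel] using this
    _ = _ := by rw [Real.circleAverage_smul, smul_eq_mul]

lemma aux_parseval (s : Finset ℕ) (x : ℕ → ℂ) :
    Real.circleAverage (fun z => ‖∑ n ∈ s, x n * z^n‖^2) 0 1 = ∑ n ∈ s, ‖x n‖^2 := by
  have key : ∀ n m : ℕ, Real.circleAverage (fun z : ℂ => z^n * (starRingEnd ℂ z)^m) 0 1 = if n = m then 1 else 0 := by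
    intro n m
    rw [Real.circleAverage_congr_sphere (f₂ := fun z : ℂ => z ^ ((n:ℤ) - m))]
    · rw [Real.circleAverage_eq_circleIntegral one_ne_zero]
      rw [circleIntegral.integral_congr (g := fun z => (z - 0) ^ ((n:ℤ) - m - 1)) zero_le_one]
      · split_ifs with h
        · subst h
          have h1 : ((n:ℤ) - n - 1) = -1 := by ring
          simp only [h1, zpow_neg_one]
          rw [circleIntegral.integral_sub_center_inv _ one_ne_zero]
          have : (Real.pi : ℂ) ≠ 0 := by exact_mod_cast Real.pi_ne_zero
          rw [smul_eq_mul]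
          field_simp
        · rw [circleIntegral.integral_sub_zpow_of_ne (by omega)]; simp
      · intro z hz
        have hz0 : z ≠ 0 := by rintro rfl; simp at hz
        simp only [sub_zero, smul_eq_mul]
        rw [zpow_sub_one₀ hz0, mul_comm]
    · intro z hz
      have hz0 : z ≠ 0 := by rintro rfl; simp at hz
      have hz1 : ‖z‖ = 1 := by simpa using hz
      have : starRingEnd ℂ z = z⁻¹ := by rw [Complex.inv_def, Complex.normSq_eq_norm_sq, hz1]; simp
      simp only [this]
      rw [zpow_sub₀ hz0]; simp [div_eq_mul_inv]
  have hci : CircleIntegrable (fun z : ℂ => ‖∑ n ∈ s, x n * z^n‖^2) 0 1 :=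
    ContinuousOn.circleIntegrable zero_le_one (Continuous.continuousOn (by fun_prop))
  have h := Complex.ofRealCLM.circleAverage_comp_comm hci
  have h' : (Complex.ofRealCLM ∘ fun z : ℂ => ‖∑ n ∈ s, x n * z^n‖^2) = fun z => ∑ n ∈ s, ∑ m ∈ s, (x n * starRingEnd ℂ (x m)) • (z^n * (starRingEnd ℂ z)^m) := by
    ext z
    simp only [Function.comp_apply, Complex.ofRealCLM_apply]
    rw [← Complex.normSq_eq_norm_sq, ← Complex.mul_conj, map_sum, Finset.sum_mul_sum]
    refine Finset.sum_congr rfl fun n _ => Finset.sum_congr rfl fun m _ => ?_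
    simp; ring
  rw [h'] at h
  have hcc : Continuous (starRingEnd ℂ) := Complex.continuous_conj
  rw [Real.circleAverage_fun_sum] at h
  · have h3 : ∀ n ∈ s, Real.circleAverage (fun z => ∑ m ∈ s, (x n * starRingEnd ℂ (x m)) • (z^n * (starRingEnd ℂ z)^m)) 0 1 = ((‖x n‖^2 : ℝ) : ℂ) := by
      intro n hn
      rw [Real.circleAverage_fun_sum]
      · simp_rw [Real.circleAverage_fun_smul, key]
        simp [hn]
        rw [Complex.mul_conj, Complex.normSq_eq_norm_sq]; simp
      · intro i _
        exact ContinuousOn.circleIntegrable zero_le_one (Continuous.continuousOn (by fun_prop))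
    rw [Finset.sum_congr rfl h3] at h
    simp only [Complex.ofRealCLM_apply] at h
    exact_mod_cast h.symm
  · intro i _
    exact ContinuousOn.circleIntegrable zero_le_one (Continuous.continuousOn (by fun_prop))


lemma aux_bessel (F : ℂ → ℂ) (hF : DifferentiableOn ℂ F (Metric.ball 0 1)) (r : ℝ) (hr : 0 < r)
    (hr1 : r < 1) (K : ℕ) :
    ∑ k ∈ Finset.range K, ‖iteratedDeriv k F 0 / (k.factorial : ℂ)‖^2 * (r^k)^2 ≤
      Real.circleAverage (fun z => ‖F z‖^2) 0 r := by
  have hsub : Metric.closedBall (0:ℂ) r ⊆ Metric.ball 0 1 := Metric.closedBall_subset_ball hr1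
  have hss : Metric.sphere (0:ℂ) r ⊆ Metric.closedBall 0 r := Metric.sphere_subset_closedBall
  have hDC : DiffContOnCl ℂ F (Metric.ball 0 r) :=
    DifferentiableOn.diffContOnCl (by rw [closure_ball _ hr.ne']; exact hF.mono hsub)
  have hcont : Continuous (fun x : ℝ => F (circleMap 0 r x)) := by
    refine continuous_iff_continuousAt.2 fun x => ?_
    have h1 : ContinuousAt F (circleMap 0 r x) :=
      (hF.continuousOn.continuousAt (Metric.isOpen_ball.mem_nhds
        (hsub (hss (circleMap_mem_sphere 0 hr.le x)))))
    exact ContinuousAt.comp (f := circleMap 0 r) h1 (continuous_circleMap 0 r).continuousAt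
  have h2pi : (0:ℝ) < 2 * Real.pi := Real.two_pi_pos
  have hL2 : MeasureTheory.MemLp (fun x : ℝ => F (circleMap 0 r x)) 2
      (MeasureTheory.volume.restrict (Set.Ioc 0 (2 * Real.pi))) := by
    obtain ⟨C, hC⟩ := isCompact_Icc.exists_bound_of_continuousOn (s := Set.Icc 0 (2 * Real.pi)) hcont.continuousOn
    refine MeasureTheory.MemLp.of_bound hcont.aestronglyMeasurable C ?_
    refine MeasureTheory.ae_restrict_of_forall_mem measurableSet_Ioc fun x hx => hC x (Set.Ioc_subset_Icc_self hx)
  have hs := hasSum_sq_fourierCoeffOn h2pi hL2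
  have hval : (2 * Real.pi - 0)⁻¹ • ∫ x in (0:ℝ)..(2 * Real.pi), ‖F (circleMap 0 r x)‖^2 = 
      Real.circleAverage (fun z => ‖F z‖^2) 0 r := by
    rw [Real.circleAverage_def, sub_zero]
  rw [hval] at hs
  have hco : ∀ k : ℕ, fourierCoeffOn h2pi (fun x : ℝ => F (circleMap 0 r x)) (k:ℤ) =
      (r:ℂ)^k * (iteratedDeriv k F 0 / (k.factorial : ℂ)) := by
    intro k
    have hc := DiffContOnCl.circleIntegral_one_div_sub_center_pow_smul hr k hDC
    have ha : Real.circleAverage (fun z => (z^k)⁻¹ * F z) 0 r = iteratedDeriv k F 0 / (k.factorial : ℂ) := by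
      rw [Real.circleAverage_eq_circleIntegral hr.ne']
      have : (∮ z in C(0, r), (z - 0)⁻¹ • ((z^k)⁻¹ * F z)) = ∮ z in C(0, r), (1 / (z - 0)^(k+1)) • F z := by
        congr 1; ext z
        simp only [sub_zero, smul_eq_mul, one_div, pow_succ, mul_inv]; ring
      rw [this, hc]
      have : (Real.pi : ℂ) ≠ 0 := by exact_mod_cast Real.pi_ne_zero
      simp only [smul_eq_mul]
      field_simp
    rw [← ha, fourierCoeffOn_eq_integral, Real.circleAverage_def, sub_zero, one_div,
      Complex.real_smul, Complex.real_smul, mul_left_comm]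
    congr 1
    rw [← intervalIntegral.integral_const_mul]
    apply intervalIntegral.integral_congr
    intro x _
    have hrc : (r:ℂ) ≠ 0 := by exact_mod_cast hr.ne'
    have : (Real.pi : ℂ) ≠ 0 := by exact_mod_cast Real.pi_ne_zero
    simp only [smul_eq_mul, circleMap_zero]
    rw [fourier_coe_apply, mul_pow, ← mul_assoc, mul_inv, mul_inv_cancel_left₀ (pow_ne_zero _ hrc),
      ← Complex.exp_nat_mul, ← Complex.exp_neg]
    congr 2
    push_cast
    field_simp
  have := sum_le_hasSum ((Finset.range K).map ⟨fun n : ℕ => (n:ℤ), Nat.cast_injective⟩) (fun i _ => by positivity) hs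
  rw [Finset.sum_map] at this
  refine le_trans (le_of_eq ?_) this
  refine Finset.sum_congr rfl fun k _ => ?_
  simp only [Function.Embedding.coeFn_mk]
  rw [hco, norm_mul, norm_pow, Complex.norm_real, Real.norm_of_nonneg hr.le]
  ring

noncomputable def bc (ψ : ℂ → ℂ) (n k : ℕ) : ℂ := iteratedDeriv k (fun z => ψ z ^ n) 0 / (k.factorial : ℂ)

lemma aux_H1 (ψ : ℂ → ℂ) (hψ : DifferentiableOn ℂ ψ (Metric.ball 0 1))
    (hm : Set.MapsTo ψ (Metric.ball 0 1) (Metric.ball 0 1)) (s : Finset ℕ) (x : ℕ → ℂ) (K : ℕ) :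
    ∑ k ∈ Finset.range K, ‖∑ n ∈ s, bc ψ n k * x n‖^2 ≤
      (1 + ‖ψ 0‖) / (1 - ‖ψ 0‖) * ∑ n ∈ s, ‖x n‖^2 := by
  have hd : ∀ n, DifferentiableOn ℂ (fun z => ψ z ^ n) (Metric.ball 0 1) := fun n => hψ.pow n
  have hcd : ∀ n k, ContDiffAt ℂ k (fun z => ψ z ^ n) 0 := fun n k =>
    ((hd n).analyticAt (Metric.isOpen_ball.mem_nhds (by simp))).contDiffAt
  set f : ℂ → ℂ := fun z => ∑ n ∈ s, x n * z ^ n with hf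
  have hfd : Differentiable ℂ f := by fun_prop
  have hF : DifferentiableOn ℂ (fun z => f (ψ z)) (Metric.ball 0 1) :=
    hfd.comp_differentiableOn hψ
  have hcoef : ∀ k, iteratedDeriv k (fun z => f (ψ z)) 0 / (k.factorial : ℂ) = ∑ n ∈ s, bc ψ n k * x n := by
    intro k
    have : iteratedDeriv k (fun z => f (ψ z)) 0 = ∑ n ∈ s, x n * iteratedDeriv k (fun z => ψ z ^ n) 0 := by
      simp only [hf]
      rw [iteratedDeriv_fun_sum]
      · refine Finset.sum_congr rfl fun n _ => ?_
        rw [iteratedDeriv_const_mul_field]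
      · intro n _
        exact contDiffAt_const.mul (hcd n k)
    rw [this, Finset.sum_div]
    refine Finset.sum_congr rfl fun n _ => ?_
    simp only [bc]; ring
  have hmain : ∀ r : ℝ, 0 < r → r < 1 → ∑ k ∈ Finset.range K, ‖∑ n ∈ s, bc ψ n k * x n‖^2 * (r^k)^2 ≤
      (1 + ‖ψ 0‖) / (1 - ‖ψ 0‖) * ∑ n ∈ s, ‖x n‖^2 := by
    intro r hr hr1
    have h1 := aux_bessel _ hF r hr hr1 K
    have h2 := aux_little f hfd ψ hψ hm r hr hr1
    rw [aux_parseval] at h2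
    simp only [hcoef] at h1
    exact h1.trans h2
  have hlim : Tendsto (fun r : ℝ => ∑ k ∈ Finset.range K, ‖∑ n ∈ s, bc ψ n k * x n‖^2 * (r^k)^2) (𝓝[<] 1)
      (𝓝 (∑ k ∈ Finset.range K, ‖∑ n ∈ s, bc ψ n k * x n‖^2)) := by
    have hc : Continuous (fun r : ℝ => ∑ k ∈ Finset.range K, ‖∑ n ∈ s, bc ψ n k * x n‖^2 * (r^k)^2) := by fun_prop
    have := hc.tendsto 1
    simp only [one_pow, mul_one] at this
    exact this.mono_left nhdsWithin_le_nhds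
  refine le_of_tendsto hlim ?_
  filter_upwards [Ioo_mem_nhdsLT (show (0:ℝ) < 1 by norm_num)] with r hr
  exact hmain r hr.1 hr.2

lemma aux_sum (b : ℕ → ℕ → ℂ) (β : ℕ → ℝ) (hβ : ∀ k, 0 < β k) (C0 : ℝ) (hC0 : 0 ≤ C0)
    (H1 : ∀ (s : Finset ℕ) (x : ℕ → ℂ) (K : ℕ),
      ∑ k ∈ Finset.range K, ‖∑ n ∈ s, b n k * x n‖^2 ≤ C0 * ∑ n ∈ s, ‖x n‖^2)
    (L : ℕ) (D : ℝ)
    (hD : ∀ k n, Nat.log 2 k ≤ Nat.log 2 n + L → Nat.log 2 n ≤ Nat.log 2 k + L → β k ≤ D * β n)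
    (E : ℝ)
    (far : ∀ (s : Finset ℕ) (K : ℕ), ∑ k ∈ Finset.range K,
      ∑ n ∈ s with ¬ (Nat.log 2 k ≤ Nat.log 2 n + L ∧ Nat.log 2 n ≤ Nat.log 2 k + L),
        ‖((β k / β n : ℝ) : ℂ) * b n k‖^2 ≤ E)
    (a : ℕ → ℂ) (s : Finset ℕ) (K : ℕ) :
    ∑ k ∈ Finset.range K, ‖∑ n ∈ s, ((β k / β n : ℝ) : ℂ) * b n k * a n‖^2 ≤
      (2 * ((2 * L + 1) * D^4 * C0) + 2 * E) * ∑ n ∈ s, ‖a n‖^2 := by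
  classical
  set A : ℕ → ℕ → ℂ := fun k n => ((β k / β n : ℝ) : ℂ) * b n k with hA
  set near : ℕ → ℕ → Prop := fun k n => Nat.log 2 k ≤ Nat.log 2 n + L ∧ Nat.log 2 n ≤ Nat.log 2 k + L with hnear
  set X := ∑ n ∈ s, ‖a n‖^2 with hX
  have hX0 : 0 ≤ X := by positivity
  have hfar : ∑ k ∈ Finset.range K, ‖∑ n ∈ s with ¬ near k n, A k n * a n‖^2 ≤ E * X := by
    refine le_trans ?_ (mul_le_mul_of_nonneg_right (far s K) hX0)
    rw [Finset.sum_mul]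
    refine Finset.sum_le_sum fun k _ => ?_
    calc ‖∑ n ∈ s with ¬ near k n, A k n * a n‖^2 
        ≤ (∑ n ∈ s with ¬ near k n, ‖A k n‖ * ‖a n‖)^2 := by
          gcongr
          exact (norm_sum_le _ _).trans (le_of_eq (by simp))
      _ ≤ (∑ n ∈ s with ¬ near k n, ‖A k n‖^2) * ∑ n ∈ s with ¬ near k n, ‖a n‖^2 :=
          Finset.sum_mul_sq_le_sq_mul_sq _ _ _
      _ ≤ _ := by
          apply mul_le_mul_of_nonneg_left _ (by positivity)
          exact Finset.sum_le_sum_of_subset_of_nonneg (Finset.filter_subset _ _) (fun _ _ _ => by positivity)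
  set S := s.image (Nat.log 2) with hS
  set nj : ℕ → ℕ → Prop := fun k j => Nat.log 2 k ≤ j + L ∧ j ≤ Nat.log 2 k + L with hnj
  set G : ℕ → ℕ → ℂ := fun j k => ∑ n ∈ s with Nat.log 2 n = j, b n k * (a n / (β n : ℂ)) with hG
  have hD0 : 0 ≤ D := by
    have := hD 0 0 (by omega) (by omega)
    nlinarith [hβ 0]
  have hsplit : ∀ k, ∑ n ∈ s with near k n, A k n * a n = ∑ j ∈ S with nj k j, (β k : ℂ) * G j k := by
    intro k
    rw [← Finset.sum_fiberwise_of_maps_to (s := s.filter (near k)) (t := S.filter (nj k)) (g := Nat.log 2)]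
    · refine Finset.sum_congr rfl fun j hj => ?_
      rw [Finset.mem_filter] at hj
      rw [hG, Finset.mul_sum]
      have : (s.filter (near k)).filter (fun n => Nat.log 2 n = j) = s.filter (fun n => Nat.log 2 n = j) := by
        ext n
        simp only [Finset.mem_filter, hnear]
        constructor
        · rintro ⟨⟨h1, _⟩, h2⟩; exact ⟨h1, h2⟩
        · rintro ⟨h1, h2⟩
          refine ⟨⟨h1, ?_⟩, h2⟩
          rw [h2]; exact hj.2
      rw [this]
      refine Finset.sum_congr rfl fun n _ => ?_
      simp only [hA]
      push_cast; ring
    · intro n hn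
      rw [Finset.mem_filter] at hn ⊢
      exact ⟨Finset.mem_image_of_mem _ hn.1, hn.2⟩
  have hnearb : ∑ k ∈ Finset.range K, ‖∑ n ∈ s with near k n, A k n * a n‖^2 ≤ ((2 * L + 1) * D^4 * C0) * X := by
    have step1 : ∀ k, ‖∑ n ∈ s with near k n, A k n * a n‖^2 ≤ 
        (2 * L + 1) * D^2 * ∑ j ∈ S, (β (2^j))^2 * ‖G j k‖^2 := by
      intro k
      rw [hsplit]
      have hcard : ((S.filter (nj k)).card : ℝ) ≤ 2 * L + 1 := by
        have : (S.filter (nj k)).card ≤ 2 * L + 1 := by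
          calc (S.filter (nj k)).card ≤ (Finset.Icc (Nat.log 2 k - L) (Nat.log 2 k + L)).card := by
                apply Finset.card_le_card
                intro j hj
                rw [Finset.mem_filter] at hj
                have h1 := hj.2.1
                have h2 := hj.2.2
                rw [Finset.mem_Icc]; omega
            _ ≤ _ := by rw [Nat.card_Icc]; omega
        exact_mod_cast this
      calc ‖∑ j ∈ S with nj k j, (β k : ℂ) * G j k‖^2 
          ≤ (∑ j ∈ S with nj k j, ‖(β k : ℂ) * G j k‖)^2 := by gcongr; exact norm_sum_le _ _
        _ ≤ (S.filter (nj k)).card * ∑ j ∈ S with nj k j, ‖(β k : ℂ) * G j k‖^2 := sq_sum_le_card_mul_sum_sq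
        _ ≤ (2 * L + 1) * ∑ j ∈ S with nj k j, ‖(β k : ℂ) * G j k‖^2 := by gcongr
        _ ≤ (2 * L + 1) * ∑ j ∈ S with nj k j, D^2 * ((β (2^j))^2 * ‖G j k‖^2) := by
            apply mul_le_mul_of_nonneg_left _ (by positivity)
            refine Finset.sum_le_sum fun j hj => ?_
            rw [Finset.mem_filter] at hj
            have hl : Nat.log 2 (2^j) = j := Nat.log_pow (by norm_num) j
            have := hD k (2^j) (by rw [hl]; exact hj.2.1) (by rw [hl]; exact hj.2.2)
            rw [norm_mul, Complex.norm_real, Real.norm_of_nonneg (hβ k).le, ← mul_assoc, ← mul_pow D, mul_pow (β k)]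
            exact mul_le_mul_of_nonneg_right (pow_le_pow_left₀ (hβ k).le this 2) (by positivity)
        _ ≤ (2 * L + 1) * ∑ j ∈ S, D^2 * ((β (2^j))^2 * ‖G j k‖^2) := by
            apply mul_le_mul_of_nonneg_left _ (by positivity)
            exact Finset.sum_le_sum_of_subset_of_nonneg (Finset.filter_subset _ _) (fun _ _ _ => by positivity)
        _ = _ := by rw [← Finset.mul_sum]; ring
    calc _ ≤ ∑ k ∈ Finset.range K, (2 * L + 1) * D^2 * ∑ j ∈ S, (β (2^j))^2 * ‖G j k‖^2 :=
          Finset.sum_le_sum fun k _ => step1 k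
      _ = (2 * L + 1) * D^2 * ∑ j ∈ S, (β (2^j))^2 * ∑ k ∈ Finset.range K, ‖G j k‖^2 := by
          rw [← Finset.mul_sum, Finset.sum_comm]
          simp_rw [Finset.mul_sum]
      _ ≤ (2 * L + 1) * D^2 * ∑ j ∈ S, (β (2^j))^2 * (C0 * ∑ n ∈ s with Nat.log 2 n = j, ‖a n / (β n : ℂ)‖^2) := by
          gcongr with j hj
          exact H1 _ _ _
      _ ≤ (2 * L + 1) * D^2 * ∑ j ∈ S, C0 * (D^2 * ∑ n ∈ s with Nat.log 2 n = j, ‖a n‖^2) := by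
          apply mul_le_mul_of_nonneg_left _ (by positivity)
          refine Finset.sum_le_sum fun j hj => ?_
          rw [mul_left_comm]
          apply mul_le_mul_of_nonneg_left _ hC0
          rw [Finset.mul_sum, Finset.mul_sum]
          refine Finset.sum_le_sum fun n hn => ?_
          rw [Finset.mem_filter] at hn
          have hl : Nat.log 2 (2^j) = j := Nat.log_pow (by norm_num) j
          have := hD (2^j) n (by rw [hl]; omega) (by rw [hl]; omega)
          rw [norm_div, Complex.norm_real, Real.norm_of_nonneg (hβ n).le, div_pow, ← mul_div_assoc,
            div_le_iff₀ (by have := hβ n; positivity)]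
          calc β (2^j)^2 * ‖a n‖^2 ≤ (D * β n)^2 * ‖a n‖^2 := by
                have := (hβ (2^j)).le
                gcongr
            _ = _ := by ring
      _ = (2 * L + 1) * D^2 * (C0 * (D^2 * X)) := by
          rw [← Finset.mul_sum, ← Finset.mul_sum, Finset.sum_fiberwise_of_maps_to]
          intro n hn; exact Finset.mem_image_of_mem _ hn
      _ = _ := by ring
  calc ∑ k ∈ Finset.range K, ‖∑ n ∈ s, A k n * a n‖^2
      ≤ ∑ k ∈ Finset.range K, (2 * ‖∑ n ∈ s with near k n, A k n * a n‖^2 + 2 * ‖∑ n ∈ s with ¬ near k n, A k n * a n‖^2) := by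
        refine Finset.sum_le_sum fun k _ => ?_
        rw [← Finset.sum_filter_add_sum_filter_not s (near k)]
        have h1 := norm_add_le (∑ n ∈ s with near k n, A k n * a n) (∑ n ∈ s with ¬ near k n, A k n * a n)
        have h0 := norm_nonneg ((∑ n ∈ s with near k n, A k n * a n) + (∑ n ∈ s with ¬ near k n, A k n * a n))
        nlinarith [sq_nonneg (‖∑ n ∈ s with near k n, A k n * a n‖ - ‖∑ n ∈ s with ¬ near k n, A k n * a n‖)]
    _ ≤ _ := by
        rw [Finset.sum_add_distrib, ← Finset.mul_sum, ← Finset.mul_sum]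
        linarith

lemma aux_norm_sq (a : H2) : ‖a‖^2 = ∑' n, ‖a n‖^2 := by
  have := lp.norm_rpow_eq_tsum (p := 2) (by norm_num) a
  simpa using this

lemma aux_summ_sq (a : H2) : Summable (fun n => ‖a n‖^2) := by
  have := (lp.memℓp a).summable (by norm_num)
  simpa using this

lemma aux_clm (A : ℕ → ℕ → ℂ) (C : ℝ)
    (h : ∀ (a : ℕ → ℂ) (s : Finset ℕ) (K : ℕ),
      ∑ k ∈ Finset.range K, ‖∑ n ∈ s, A k n * a n‖^2 ≤ C * ∑ n ∈ s, ‖a n‖^2) :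
    ∃ T : H2 →L[ℂ] H2, ∀ n k, T (lp.single 2 n (1:ℂ)) k = A k n := by
  have hrow : ∀ k, Summable (fun n => ‖A k n‖^2) := by
    intro k
    refine summable_of_sum_le (c := C) (fun n => by positivity) fun s => ?_
    have h1 := h (fun n => starRingEnd ℂ (A k n)) s (k+1)
    set Q := ∑ n ∈ s, ‖A k n‖^2 with hQ
    have hQ0 : 0 ≤ Q := by positivity
    have h2 : ‖∑ n ∈ s, A k n * starRingEnd ℂ (A k n)‖^2 = Q^2 := by
      have : ∑ n ∈ s, A k n * starRingEnd ℂ (A k n) = ((Q:ℝ):ℂ) := by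
        rw [hQ]; push_cast
        refine Finset.sum_congr rfl fun n _ => ?_
        rw [Complex.mul_conj, Complex.normSq_eq_norm_sq]; push_cast; rfl
      rw [this, Complex.norm_real, Real.norm_of_nonneg hQ0]
    have h3 : ‖∑ n ∈ s, A k n * starRingEnd ℂ (A k n)‖^2 ≤ ∑ k' ∈ Finset.range (k+1), ‖∑ n ∈ s, A k' n * starRingEnd ℂ (A k n)‖^2 :=
      Finset.single_le_sum (f := fun k' => ‖∑ n ∈ s, A k' n * starRingEnd ℂ (A k n)‖^2) (fun i _ => by positivity) (by simp)
    simp only [RCLike.norm_conj] at h1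
    rw [h2] at h3
    have h4 : Q^2 ≤ C * Q := h3.trans h1
    by_contra hc
    push Not at hc
    have hQpos : 0 < Q := by
      rcases hQ0.eq_or_lt with h0 | h0
      · have h5 := h (fun n => if n = 0 then 1 else 0) {0} 0
        simp at h5; linarith
      · exact h0
    nlinarith
  have hC : 0 ≤ C := by
    have h5 := h (fun n => if n = 0 then 1 else 0) {0} 0
    simpa using h5
  have hs : ∀ (a : H2) k, Summable (fun n => A k n * a n) := by
    intro a k
    refine Summable.of_norm_bounded ((hrow k).add (aux_summ_sq a)) fun n => ?_
    rw [norm_mul]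
    nlinarith [sq_nonneg (‖A k n‖ - ‖a n‖), sq_nonneg (‖A k n‖), sq_nonneg ‖a n‖]
  have hb : ∀ (a : H2) K, ∑ k ∈ Finset.range K, ‖∑' n, A k n * a n‖^2 ≤ C * ‖a‖^2 := by
    intro a K
    have ht : Tendsto (fun s : Finset ℕ => ∑ k ∈ Finset.range K, ‖∑ n ∈ s, A k n * a n‖^2) atTop
        (𝓝 (∑ k ∈ Finset.range K, ‖∑' n, A k n * a n‖^2)) :=
      tendsto_finsetSum _ fun k _ => ((hs a k).hasSum.norm).pow 2
    refine le_of_tendsto' ht fun s => (h a s K).trans ?_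
    rw [aux_norm_sq]
    exact mul_le_mul_of_nonneg_left ((aux_summ_sq a).sum_le_tsum s (fun _ _ => by positivity)) hC
  have hb' : ∀ (a : H2) (s : Finset ℕ), ∑ k ∈ s, ‖∑' n, A k n * a n‖^2 ≤ C * ‖a‖^2 := by
    intro a s
    obtain ⟨K, hK⟩ := s.exists_nat_subset_range
    exact (Finset.sum_le_sum_of_subset_of_nonneg hK (fun _ _ _ => by positivity)).trans (hb a K)
  have hmem : ∀ a : H2, Memℓp (fun k => ∑' n, A k n * a n) 2 := by
    intro a
    refine memℓp_gen' (C := C * ‖a‖^2) fun s => ?_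
    simpa using hb' a s
  let T0 : H2 →ₗ[ℂ] H2 :=
    { toFun := fun a => ⟨fun k => ∑' n, A k n * a n, hmem a⟩
      map_add' := by
        intro a b
        ext k
        show ∑' n, A k n * (a + b) n = (∑' n, A k n * a n) + ∑' n, A k n * b n
        rw [← (hs a k).tsum_add (hs b k)]
        congr 1; ext n
        simp [mul_add]
      map_smul' := by
        intro c a
        ext k
        show ∑' n, A k n * (c • a) n = c * ∑' n, A k n * a n
        rw [← tsum_mul_left]
        congr 1; ext n
        simp; ring }
  have hT0 : ∀ a k, T0 a k = ∑' n, A k n * a n := fun a k => rfl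
  refine ⟨T0.mkContinuous (Real.sqrt C) ?_, ?_⟩
  · intro a
    refine lp.norm_le_of_forall_sum_le (p := 2) (by norm_num) (by positivity) fun s => ?_
    have := hb' a s
    simp only [hT0]
    simpa [mul_pow, Real.sq_sqrt hC] using this
  · intro n k
    show T0 _ k = _
    rw [hT0, tsum_eq_single n]
    · simp
    · intro m hm
      simp [lp.single_apply, Pi.single_apply, hm]

lemma aux_beta_pos (w : ℕ → ℝ) (hw : PolyGrowth w) (k : ℕ) : 0 < betaSeq w k :=
  Finset.prod_pos fun j hj => hw.1 j (Finset.mem_Icc.1 hj).1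

lemma aux_beta_succ (w : ℕ → ℝ) (k : ℕ) : betaSeq w (k+1) = betaSeq w k * w (k+1) := by
  simp only [betaSeq]
  rw [Finset.prod_Icc_succ_top (by omega)]

lemma aux_w (w : ℕ → ℝ) (hw : PolyGrowth w) : ∃ M : ℝ, 0 ≤ M ∧ ∀ j : ℕ, 1 ≤ j →
    w j ≤ Real.exp (M / (j + 1)) ∧ 1 ≤ w j * Real.exp (M / (j+1)) := by
  obtain ⟨hpos, hlim, M, hM⟩ := hw
  have hM0 : 0 ≤ M := le_trans (by positivity) (hM 1 le_rfl)
  have hinv : Tendsto (fun j => (w j)⁻¹) atTop (𝓝 1) := by simpa using hlim.inv₀ one_ne_zero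
  obtain ⟨B, hB⟩ := hinv.bddAbove_range
  have hB' : ∀ j, (w j)⁻¹ ≤ B := fun j => hB ⟨j, rfl⟩
  refine ⟨M * (1 + |B|), by positivity, fun j hj => ?_⟩
  have hwj := hpos j hj
  have hj1 : (0:ℝ) < j + 1 := by positivity
  have habs : |w j - 1| ≤ M / (j+1) := by
    rw [le_div_iff₀ hj1, mul_comm]; exact hM j hj
  have hq : 0 ≤ M / (j+1) := by positivity
  have heq : M * (1 + |B|) / (j+1) = M / (j+1) * (1 + |B|) := by ring
  rw [heq]
  have hexp := Real.add_one_le_exp (M / (j+1) * (1 + |B|))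
  have h1 := le_abs_self (w j - 1)
  have h2 := neg_abs_le (w j - 1)
  constructor
  · nlinarith [mul_nonneg hq (abs_nonneg B)]
  · have h3 : (w j)⁻¹ ≤ M / (j+1) * (1 + |B|) + 1 := by
      have : (w j)⁻¹ = 1 + (1 - w j) * (w j)⁻¹ := by field_simp; ring
      have h4 : (1 - w j) * (w j)⁻¹ ≤ M / (j+1) * |B| := by
        have h5 : (w j)⁻¹ ≤ |B| := (hB' j).trans (le_abs_self B)
        have h6 : 0 ≤ (w j)⁻¹ := by positivity
        calc (1 - w j) * (w j)⁻¹ ≤ (M / (j+1)) * (w j)⁻¹ := by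
              apply mul_le_mul_of_nonneg_right _ h6; linarith
          _ ≤ _ := by gcongr
      rw [this]; nlinarith
    calc 1 = w j * (w j)⁻¹ := by field_simp
      _ ≤ _ := by gcongr; linarith

lemma aux_beta_cmp (w : ℕ → ℝ) (hw : PolyGrowth w) : ∃ M : ℝ, 0 ≤ M ∧ ∀ m d : ℕ,
    betaSeq w (m+d) ≤ betaSeq w m * Real.exp (M * d / (m+1)) ∧
    betaSeq w m ≤ betaSeq w (m+d) * Real.exp (M * d / (m+1)) := by
  obtain ⟨M, hM0, hM⟩ := aux_w w hw
  refine ⟨M, hM0, fun m d => ?_⟩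
  induction d with
  | zero => simp
  | succ d ih =>
    have hb := aux_beta_succ w (m+d)
    obtain ⟨h1, h2⟩ := hM (m+d+1) (by omega)
    have hwp := hw.1 (m+d+1) (by omega)
    have hp1 := aux_beta_pos w hw m
    have hp2 := aux_beta_pos w hw (m+d)
    have hle : Real.exp (M / (((m+d+1 : ℕ):ℝ) + 1)) ≤ Real.exp (M / (m+1)) := by
      apply Real.exp_le_exp.2
      apply div_le_div_of_nonneg_left hM0 (by positivity)
      push_cast; linarith [Nat.cast_nonneg (α := ℝ) d]
    have hexp : Real.exp (M * ((d+1 : ℕ):ℝ) / (m+1)) = Real.exp (M * d / (m+1)) * Real.exp (M / (m+1)) := by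
      rw [← Real.exp_add]; congr 1; push_cast; ring
    rw [← add_assoc, hb, hexp]
    constructor
    · rw [← mul_assoc]
      exact mul_le_mul ih.1 (h1.trans hle) hwp.le (by positivity)
    · have h3 : 1 ≤ w (m+d+1) * Real.exp (M / (m+1)) := h2.trans (by gcongr)
      calc betaSeq w m ≤ betaSeq w (m+d) * Real.exp (M * d / (m+1)) * 1 := by rw [mul_one]; exact ih.2
        _ ≤ betaSeq w (m+d) * Real.exp (M * d / (m+1)) * (w (m+d+1) * Real.exp (M / (m+1))) := by gcongr
        _ = _ := by ring

lemma aux_log (k n L : ℕ) (h : Nat.log 2 k ≤ Nat.log 2 n + L) : k ≤ 2^(L+1) * (n+1) := by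
  have h1 : k < 2^(Nat.log 2 k + 1) := Nat.lt_pow_succ_log_self (by norm_num) k
  have h2 : 2^(Nat.log 2 n) ≤ n + 1 := by
    rcases Nat.eq_zero_or_pos n with rfl | hn
    · simp
    · exact (Nat.pow_log_le_self 2 hn.ne').trans (by omega)
  calc k ≤ 2^(Nat.log 2 k + 1) := h1.le
    _ ≤ 2^(L + 1 + Nat.log 2 n) := Nat.pow_le_pow_right (by norm_num) (by omega)
    _ = 2^(L+1) * 2^(Nat.log 2 n) := by rw [pow_add]
    _ ≤ _ := Nat.mul_le_mul_left _ h2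

lemma aux_near (w : ℕ → ℝ) (hw : PolyGrowth w) (L : ℕ) : ∃ D : ℝ, ∀ k n : ℕ,
    Nat.log 2 k ≤ Nat.log 2 n + L → Nat.log 2 n ≤ Nat.log 2 k + L →
      betaSeq w k ≤ D * betaSeq w n := by
  obtain ⟨M, hM0, hM⟩ := aux_beta_cmp w hw
  have key : ∀ m d : ℕ, m + d ≤ 2^(L+1) * (m+1) → 
      Real.exp (M * d / (m+1)) ≤ Real.exp (M * 2^(L+1)) := by
    intro m d h
    apply Real.exp_le_exp.2
    rw [div_le_iff₀ (by positivity), mul_assoc]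
    apply mul_le_mul_of_nonneg_left _ hM0
    have : d ≤ 2^(L+1) * (m+1) := by omega
    exact_mod_cast this
  refine ⟨Real.exp (M * 2^(L+1)), fun k n h1 h2 => ?_⟩
  rw [mul_comm]
  rcases le_total k n with h | h
  · obtain ⟨d, rfl⟩ := Nat.exists_eq_add_of_le h
    have := aux_beta_pos w hw (k+d)
    exact (hM k d).2.trans (mul_le_mul_of_nonneg_left (key k d (aux_log _ _ _ h2)) this.le)
  · obtain ⟨d, rfl⟩ := Nat.exists_eq_add_of_le h
    have := aux_beta_pos w hw n
    exact (hM n d).1.trans (mul_le_mul_of_nonneg_left (key n d (aux_log _ _ _ h1)) this.le)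

lemma aux_summ1 (w : ℕ → ℝ) (hw : PolyGrowth w) (ρ : ℝ) (h0 : 0 < ρ) (h1 : ρ < 1) :
    Summable (fun k => (betaSeq w k * ρ^k)^2) := by
  have hl : Tendsto (fun k => (w (k+1) * ρ)^2) atTop (𝓝 ((1 * ρ)^2)) :=
    ((hw.2.1.comp (tendsto_add_atTop_nat 1)).mul_const ρ).pow 2
  refine summable_of_ratio_test_tendsto_lt_one (l := (1*ρ)^2) (by nlinarith) ?_ ?_
  · filter_upwards with k
    have := aux_beta_pos w hw k
    positivity
  · refine hl.congr fun k => ?_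
    have := aux_beta_pos w hw k
    have h2 := hw.1 (k+1) (by omega)
    rw [aux_beta_succ, Real.norm_of_nonneg (by positivity), Real.norm_of_nonneg (by positivity)]
    field_simp
    ring

lemma aux_summ2 (w : ℕ → ℝ) (hw : PolyGrowth w) (ρ : ℝ) (h0 : 0 < ρ) (h1 : ρ < 1) :
    Summable (fun k => (ρ^k / betaSeq w k)^2) := by
  have hl : Tendsto (fun k => ((w (k+1))⁻¹ * ρ)^2) atTop (𝓝 ((1⁻¹ * ρ)^2)) :=
    (((hw.2.1.comp (tendsto_add_atTop_nat 1)).inv₀ one_ne_zero).mul_const ρ).pow 2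
  refine summable_of_ratio_test_tendsto_lt_one (l := (1⁻¹*ρ)^2) (by rw [inv_one]; nlinarith) ?_ ?_
  · filter_upwards with k
    have := aux_beta_pos w hw k
    positivity
  · refine hl.congr fun k => ?_
    have := aux_beta_pos w hw k
    have h2 := hw.1 (k+1) (by omega)
    rw [aux_beta_succ, Real.norm_of_nonneg (by positivity), Real.norm_of_nonneg (by positivity)]
    field_simp
    ring

lemma aux_pow (X t : ℝ) (L n k : ℕ) (hX : 0 ≤ X) (ht0 : 0 < t) (ht1 : t ≤ 1) (h : X * t^(2*2^L) ≤ 1)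
    (hk : 2^L * (n+1) ≤ k) : X^n * (t^4)^k ≤ t^(n+k) := by
  have h1 : X^n * t^(2*k) ≤ 1 := by
    calc X^n * t^(2*k) ≤ X^n * t^(2*2^L*n) := by
          apply mul_le_mul_of_nonneg_left _ (by positivity)
          apply pow_le_pow_of_le_one ht0.le ht1
          nlinarith
      _ = (X * t^(2*2^L))^n := by rw [mul_pow, ← pow_mul]
      _ ≤ 1 := pow_le_one₀ (by positivity) h
  have hnk : n ≤ k := by
    have := Nat.one_le_two_pow (n := L)
    nlinarith
  calc X^n * (t^4)^k = (X^n * t^(2*k)) * t^(2*k) := by rw [← pow_mul, mul_assoc, ← pow_add]; congr 2; ring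
    _ ≤ 1 * t^(2*k) := by gcongr
    _ ≤ t^(n+k) := by rw [one_mul]; exact pow_le_pow_of_le_one ht0.le ht1 (by omega)

lemma aux_far_log (k n L : ℕ) (h : Nat.log 2 n + L < Nat.log 2 k) : 2^L * (n+1) ≤ k := by
  have hk : k ≠ 0 := by rintro rfl; simp at h
  have h1 : n < 2^(Nat.log 2 n + 1) := Nat.lt_pow_succ_log_self (by norm_num) n
  calc 2^L * (n+1) ≤ 2^L * 2^(Nat.log 2 n + 1) := Nat.mul_le_mul_left _ h1
    _ = 2^(L + (Nat.log 2 n + 1)) := (pow_add 2 L _).symm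
    _ ≤ 2^(Nat.log 2 k) := Nat.pow_le_pow_right (by norm_num) (by omega)
    _ ≤ k := Nat.pow_log_le_self 2 hk

lemma aux_exL (X t : ℝ) (hX : 0 ≤ X) (ht0 : 0 < t) (ht1 : t < 1) : ∃ L0 : ℕ, ∀ L ≥ L0, X * t^(2*2^L) ≤ 1 := by
  obtain ⟨N, hN⟩ := exists_pow_lt_of_lt_one (show (0:ℝ) < 1/(X+1) by positivity) ht1
  refine ⟨N, fun L hL => ?_⟩
  have h1 : N ≤ 2 * 2^L := by have := @Nat.lt_two_pow_self L; omega
  have h2 : t^(2*2^L) ≤ 1/(X+1) := (pow_le_pow_of_le_one ht0.le ht1.le h1).trans hN.le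
  calc X * t^(2*2^L) ≤ X * (1/(X+1)) := by gcongr
    _ ≤ 1 := by rw [mul_one_div, div_le_one (by positivity)]; linarith

lemma aux_cauchy (ψ : ℂ → ℂ) (R S : ℝ) (hR : 0 < R) (h : DifferentiableOn ℂ ψ (Metric.closedBall 0 R))
    (hS : ∀ z ∈ Metric.closedBall (0:ℂ) R, ‖ψ z‖ ≤ S) (n k : ℕ) : ‖bc ψ n k‖ ≤ S^n * (R⁻¹)^k := by
  have hd : DiffContOnCl ℂ (fun z => ψ z ^ n) (Metric.ball 0 R) :=
    DifferentiableOn.diffContOnCl (by rw [closure_ball _ hR.ne']; exact h.pow n)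
  have := Complex.norm_iteratedDeriv_le_of_forall_mem_sphere_norm_le (C := S^n) k hR hd (by
    intro z hz
    rw [norm_pow]
    exact pow_le_pow_left₀ (norm_nonneg _) (hS z (Metric.sphere_subset_closedBall hz)) n)
  have hf : (0:ℝ) < k.factorial := by exact_mod_cast k.factorial_pos
  rw [bc, norm_div, Complex.norm_natCast, div_le_iff₀ hf]
  refine this.trans (le_of_eq ?_)
  rw [inv_pow]; field_simp

lemma aux_decay (ψ : ℂ → ℂ) (hψ : AnalyticOnClosedDisk ψ)
    (hm : Set.MapsTo ψ (Metric.ball 0 1) (Metric.ball 0 1)) :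
    ∃ (L : ℕ) (ρ : ℝ), 0 < ρ ∧ ρ < 1 ∧ ∀ n k,
      ¬ (Nat.log 2 k ≤ Nat.log 2 n + L ∧ Nat.log 2 n ≤ Nat.log 2 k + L) → ‖bc ψ n k‖ ≤ ρ^(n+k) := by
  obtain ⟨U, hU, hsub, hA⟩ := hψ
  obtain ⟨e, he, heU⟩ := (isCompact_closedBall (0:ℂ) 1).exists_cthickening_subset_open hU hsub
  rw [cthickening_closedBall he.le zero_le_one] at heU
  set R := e + 1 with hRdef
  have hR : 1 < R := by linarith
  have hd : DifferentiableOn ℂ ψ (Metric.closedBall 0 R) :=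
    (hA.differentiableOn).mono heU
  obtain ⟨S, hS⟩ := (isCompact_closedBall (0:ℂ) R).exists_bound_of_continuousOn hd.continuousOn
  have hS0 : 0 ≤ S := (norm_nonneg _).trans (hS 0 (by simp; linarith))
  -- inner radius
  have hsub2 : Metric.closedBall (0:ℂ) (1/2) ⊆ Metric.ball 0 1 := Metric.closedBall_subset_ball (by norm_num)
  have hd2 : DifferentiableOn ℂ ψ (Metric.closedBall 0 (1/2)) :=
    hd.mono (Metric.closedBall_subset_closedBall (by linarith))
  obtain ⟨z0, hz0, hmax⟩ := (isCompact_closedBall (0:ℂ) (1/2)).exists_isMaxOn ⟨0, by simp⟩ hd2.continuousOn.norm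
  have hz0' : ‖ψ z0‖ < 1 := by simpa using hm (hsub2 hz0)
  set σ := (1 + ‖ψ z0‖)/2 with hσ
  have hσ0 : 0 < σ := by positivity
  have hσ1 : σ < 1 := by linarith
  have hσb : ∀ z ∈ Metric.closedBall (0:ℂ) (1/2), ‖ψ z‖ ≤ σ := fun z hz => by
    have h1 : ‖ψ z‖ ≤ ‖ψ z0‖ := hmax hz
    linarith
  have root : ∀ x : ℝ, 0 < x → x < 1 → ∃ t, 0 < t ∧ t < 1 ∧ t^4 = x := by
    intro x hx hx1
    refine ⟨Real.sqrt (Real.sqrt x), by positivity, ?_, ?_⟩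
    · rw [Real.sqrt_lt' one_pos, Real.sqrt_lt' (by norm_num)]; simpa using hx1
    · have : Real.sqrt (Real.sqrt x)^4 = ((Real.sqrt (Real.sqrt x))^2)^2 := by ring
      rw [this, Real.sq_sqrt (by positivity), Real.sq_sqrt hx.le]
  obtain ⟨t, ht0, ht1, ht⟩ := root R⁻¹ (by positivity) (inv_lt_one_of_one_lt₀ hR)
  obtain ⟨τ, hτ0, hτ1, hτ⟩ := root σ hσ0 hσ1
  obtain ⟨L1, hL1⟩ := aux_exL S t hS0 ht0 ht1
  obtain ⟨L2, hL2⟩ := aux_exL 2 τ (by norm_num) hτ0 hτ1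
  refine ⟨max L1 L2, max t τ, lt_max_of_lt_left ht0, max_lt ht1 hτ1, fun n k hnk => ?_⟩
  have hcase : Nat.log 2 n + max L1 L2 < Nat.log 2 k ∨ Nat.log 2 k + max L1 L2 < Nat.log 2 n := by omega
  rcases hcase with h | h
  · have h1 := aux_cauchy ψ R S (by linarith) hd hS n k
    rw [← ht] at h1
    refine h1.trans ((aux_pow S t _ n k hS0 ht0 ht1.le (hL1 _ (le_max_left _ _)) (aux_far_log _ _ _ h)).trans ?_)
    exact pow_le_pow_left₀ ht0.le (le_max_left _ _) _
  · have h1 := aux_cauchy ψ (1/2) σ (by norm_num) hd2 hσb n k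
    rw [← hτ, mul_comm] at h1
    have h2 : ((1/2:ℝ)⁻¹) = 2 := by norm_num
    rw [h2] at h1
    refine h1.trans ((aux_pow 2 τ _ k n (by norm_num) hτ0 hτ1.le (hL2 _ (le_max_right _ _)) (aux_far_log _ _ _ h)).trans ?_)
    rw [add_comm]
    exact pow_le_pow_left₀ hτ0.le (le_max_right _ _) _


lemma aux_eval (w : ℕ → ℝ) (hw : PolyGrowth w) (z : ℂ) (hz : ‖z‖ < 1) :
    ∃ e : H2 →L[ℂ] ℂ, ∀ a, e a = repFun (betaSeq w) a z := by
  have hs : Summable (fun k => (((1 + ‖z‖)/2)^k / betaSeq w k)^2) :=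
    aux_summ2 w hw ((1 + ‖z‖)/2) (by positivity) (by linarith)
  have hmem : Memℓp (fun k => starRingEnd ℂ (z^k / (betaSeq w k : ℂ))) 2 := by
    refine memℓp_gen ?_
    refine Summable.of_nonneg_of_le (fun k => by positivity) (fun k => ?_) hs
    have hb := aux_beta_pos w hw k
    simp only [RCLike.norm_conj, norm_div, norm_pow, Complex.norm_real, Real.norm_of_nonneg hb.le]
    norm_num
    have : ‖z‖ ≤ (1 + ‖z‖)/2 := by linarith
    gcongr
  refine ⟨innerSL ℂ (⟨_, hmem⟩ : H2), fun a => ?_⟩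
  rw [innerSL_apply_apply, lp.inner_eq_tsum, repFun]
  refine tsum_congr fun k => ?_
  simp only [RCLike.inner_apply, Complex.conj_conj]
  ring

lemma aux_main (w : ℕ → ℝ) (hw : PolyGrowth w) (ψ : ℂ → ℂ)
    (hd : DifferentiableOn ℂ ψ (Metric.ball 0 1))
    (hm : Set.MapsTo ψ (Metric.ball 0 1) (Metric.ball 0 1)) (T : H2 →L[ℂ] H2)
    (hT : ∀ n k, T (lp.single 2 n (1:ℂ)) k = ((betaSeq w k / betaSeq w n : ℝ) : ℂ) * bc ψ n k) :
    RepComp (betaSeq w) ψ T := by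
  intro a z hz
  have hz' : z ∈ Metric.ball (0:ℂ) 1 := hz
  have hψz := hm hz'
  obtain ⟨e1, he1⟩ := aux_eval w hw z (by simpa using hz')
  obtain ⟨e2, he2⟩ := aux_eval w hw (ψ z) (by simpa using hψz)
  rw [← he1, ← he2]
  have hsingle : ∀ n, e1 (T (lp.single 2 n (1:ℂ))) = e2 (lp.single 2 n (1:ℂ)) := by
    intro n
    have hbn := aux_beta_pos w hw n
    have hbn' : (betaSeq w n : ℂ) ≠ 0 := by exact_mod_cast hbn.ne'
    have hR : repFun (betaSeq w) (lp.single 2 n (1:ℂ)) (ψ z) = (betaSeq w n : ℂ)⁻¹ * (ψ z ^ n) := by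
      rw [repFun, tsum_eq_single n]
      · simp
      · intro m hmn
        simp [lp.single_apply, hmn]
    rw [he1, he2, hR, repFun]
    · have h := Complex.hasSum_taylorSeries_on_ball (hd.pow n) hz'
      have h2 := h.mul_left ((betaSeq w n : ℂ)⁻¹)
      have h3 : HasSum (fun k => T (lp.single 2 n (1:ℂ)) k / (betaSeq w k : ℂ) * z^k)
          ((betaSeq w n : ℂ)⁻¹ * (ψ z ^ n)) := by
        refine h2.congr_fun ?_ 
        intro k
        have hbk := aux_beta_pos w hw k
        have hbk' : (betaSeq w k : ℂ) ≠ 0 := by exact_mod_cast hbk.ne'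
        have hf : (k.factorial : ℂ) ≠ 0 := by exact_mod_cast k.factorial_ne_zero
        rw [hT]
        simp only [bc, sub_zero, smul_eq_mul]
        push_cast
        field_simp
        exact mul_comm _ _
      exact h3.tsum_eq
  have hsum := lp.hasSum_single (p := 2) ENNReal.ofNat_ne_top a
  have hs1 := (e1.comp T).hasSum hsum
  have hs2 := e2.hasSum hsum
  have heq : (fun n => (e1.comp T) (lp.single 2 n (a n))) = fun n => e2 (lp.single 2 n (a n)) := by
    funext n
    have : (lp.single 2 n (a n) : H2) = a n • lp.single 2 n (1:ℂ) := by
      rw [← lp.single_smul]; simp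
    rw [this, map_smul, map_smul, ContinuousLinearMap.comp_apply, hsingle]
  have hs1' : HasSum (fun n => (e1.comp T) (lp.single 2 n (a n))) ((e1.comp T) a) := hs1
  rw [heq] at hs1'
  exact hs1'.unique hs2

lemma aux_far (w : ℕ → ℝ) (hw : PolyGrowth w) (b : ℕ → ℕ → ℂ) (L : ℕ) (ρ : ℝ) (h0 : 0 < ρ) (h1 : ρ < 1)
    (h : ∀ n k, ¬ (Nat.log 2 k ≤ Nat.log 2 n + L ∧ Nat.log 2 n ≤ Nat.log 2 k + L) → ‖b n k‖ ≤ ρ^(n+k))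
    (s : Finset ℕ) (K : ℕ) : ∑ k ∈ Finset.range K,
      ∑ n ∈ s with ¬ (Nat.log 2 k ≤ Nat.log 2 n + L ∧ Nat.log 2 n ≤ Nat.log 2 k + L),
        ‖((betaSeq w k / betaSeq w n : ℝ) : ℂ) * b n k‖^2 ≤
      (∑' k, (betaSeq w k * ρ^k)^2) * ∑' n, (ρ^n / betaSeq w n)^2 := by
  have hs1 := aux_summ1 w hw ρ h0 h1
  have hs2 := aux_summ2 w hw ρ h0 h1
  calc _ ≤ ∑ k ∈ Finset.range K, ∑ n ∈ s, (betaSeq w k * ρ^k)^2 * (ρ^n / betaSeq w n)^2 := by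
        refine Finset.sum_le_sum fun k _ => ?_
        refine le_trans (Finset.sum_le_sum (g := fun n => (betaSeq w k * ρ^k)^2 * (ρ^n / betaSeq w n)^2) fun n hn => ?_) ?_
        · rw [Finset.mem_filter] at hn
          have hb := h n k hn.2
          have hbk := aux_beta_pos w hw k
          have hbn := aux_beta_pos w hw n
          rw [norm_mul, Complex.norm_real, Real.norm_of_nonneg (by positivity), ← mul_pow]
          refine pow_le_pow_left₀ (by positivity) ?_ 2
          refine (mul_le_mul_of_nonneg_left hb (by positivity)).trans (le_of_eq ?_)
          rw [pow_add]; ring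
        · exact Finset.sum_le_sum_of_subset_of_nonneg (Finset.filter_subset _ _) (fun _ _ _ => by positivity)
    _ = (∑ k ∈ Finset.range K, (betaSeq w k * ρ^k)^2) * ∑ n ∈ s, (ρ^n / betaSeq w n)^2 := by
        rw [Finset.sum_mul_sum]
    _ ≤ _ := by
        refine mul_le_mul (hs1.sum_le_tsum _ fun _ _ => by positivity) (hs2.sum_le_tsum _ fun _ _ => by positivity)
          (by positivity) (tsum_nonneg fun _ => by positivity)

/-- On a weighted Hardy space `H²_β` of polynomial growth, if `ψ` is
analytic on an open neighbourhood of the closed unit disk and `ψ(𝔻) ⊆ 𝔻`, then the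
composition operator `C_ψ` is bounded on `H²_β`. -/
theorem statement2 (w : ℕ → ℝ) (hw : PolyGrowth w) (ψ : ℂ → ℂ)
    (hψ : AnalyticOnClosedDisk ψ) (hmap : Set.MapsTo ψ unitDisk unitDisk) :
    ∃ T : H2 →L[ℂ] H2, RepComp (betaSeq w) ψ T := by
  have hm : Set.MapsTo ψ (Metric.ball 0 1) (Metric.ball 0 1) := hmap
  have hd : DifferentiableOn ℂ ψ (Metric.ball 0 1) := by
    obtain ⟨U, _, hU, hA⟩ := hψ
    exact hA.differentiableOn.mono (Metric.ball_subset_closedBall.trans hU)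
  obtain ⟨L, ρ, h0, h1, hdec⟩ := aux_decay ψ hψ hm
  obtain ⟨D, hD⟩ := aux_near w hw L
  have hψ0 : ‖ψ 0‖ < 1 := by simpa using hm (Metric.mem_ball_self one_pos)
  have hC0 : 0 ≤ (1 + ‖ψ 0‖) / (1 - ‖ψ 0‖) := div_nonneg (by positivity) (by linarith)
  have hmat := aux_sum (bc ψ) (betaSeq w) (aux_beta_pos w hw) _ hC0 (aux_H1 ψ hd hm) L D hD _
    (aux_far w hw (bc ψ) L ρ h0 h1 hdec)
  obtain ⟨T, hT⟩ := aux_clm (fun k n => ((betaSeq w k / betaSeq w n : ℝ) : ℂ) * bc ψ n k) _ hmat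
  exact ⟨T, aux_main w hw ψ hd hm T hT⟩
end
end

section
/- Let H²_β be the weighted Hardy space induced by a weight sequence w = (w_k)_{k≥1} with w_k → 1, and let B(z) = ∏_{j=1}^m (z_j − z)/(1 − conj(z_j)z) be a Blaschke product on 𝔻 with m distinct zero points z_1, …, z_m ∈ 𝔻. Then the sequence {B^n(z)/(1 − conj(z_j)z) : 1 ≤ j ≤ m, n = 0, 1, 2, …} is total and finitely linearly independent in H²_β. -/
noncomputable section

open Complex Filter Topology

lemma ps_zero (u : ℕ → ℂ) (h : ∀ r : ℝ, 0 ≤ r → r < 1 → Summable (fun k => ‖u k‖ * r ^ k))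
    (z0 : ℂ) (hz0 : z0 ∈ unitDisk) (hf : ∃ᶠ z in 𝓝[≠] z0, ∑' k, u k * z ^ k = 0) :
    ∀ k, u k = 0 := by
  set p := FormalMultilinearSeries.ofScalars ℂ u with hp
  have hr : 1 ≤ p.radius := by
    refine ENNReal.le_of_forall_nnreal_lt fun r hr => ?_
    apply FormalMultilinearSeries.le_radius_of_summable
    simp only [hp, FormalMultilinearSeries.ofScalars_norm]
    exact h r r.2 (by exact_mod_cast hr)
  have hsum : p.sum = fun z => ∑' k, u k * z ^ k := by
    funext z
    have := FormalMultilinearSeries.ofScalars_sum_eq u z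
    simpa [FormalMultilinearSeries.ofScalarsSum] using this
  have hb := p.hasFPowerSeriesOnBall (lt_of_lt_of_le one_pos hr)
  have hA : AnalyticOnNhd ℂ p.sum unitDisk := by
    refine hb.analyticOnNhd.mono ?_
    intro z hz
    have hz' : ‖z‖ < 1 := by simpa [unitDisk] using hz
    refine lt_of_lt_of_le ?_ hr
    rw [edist_zero_right]
    have : ‖z‖₊ < 1 := by exact_mod_cast hz'
    rw [enorm_eq_nnnorm]; exact_mod_cast this
  have hz : Set.EqOn p.sum 0 unitDisk := by
    refine hA.eqOn_zero_of_preconnected_of_frequently_eq_zero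
      (convex_ball (0:ℂ) 1).isPreconnected hz0 ?_
    rw [hsum]; exact hf
  have h0 : HasFPowerSeriesAt (0 : ℂ → ℂ) p 0 := by
    refine hb.hasFPowerSeriesAt.congr ?_
    filter_upwards [Metric.ball_mem_nhds (0:ℂ) one_pos] with z hz'
    exact hz hz'
  have hp0 := h0.eq_zero
  intro k
  rw [← FormalMultilinearSeries.coeff_ofScalars (p := u) (n := k), ← hp, hp0]
  rfl

lemma ne1 {a z : ℂ} (ha : a ∈ unitDisk) (hz : z ∈ unitDisk) : 1 - a * z ≠ 0 := by
  intro h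
  have ha' : ‖a‖ < 1 := by simpa [unitDisk] using ha
  have hz' : ‖z‖ < 1 := by simpa [unitDisk] using hz
  have h1 : a * z = 1 := (sub_eq_zero.mp h).symm
  have h2 : ‖a‖ * ‖z‖ = 1 := by rw [← norm_mul, h1, norm_one]
  nlinarith [norm_nonneg a, norm_nonneg z]

lemma conj_mem {a : ℂ} (ha : a ∈ unitDisk) : (starRingEnd ℂ) a ∈ unitDisk := by
  simpa [unitDisk] using ha

lemma cauchy_aux {m : ℕ} (x : Fin m → ℂ) (hx : ∀ j, x j ∈ unitDisk)
    (hinj : Function.Injective x) (s : Finset (Fin m)) :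
    ∀ α : Fin m → ℂ, (∀ i ∈ s, ∑ j ∈ s, α j / (1 - (starRingEnd ℂ) (x j) * x i) = 0) →
      ∀ j ∈ s, α j = 0 := by
  induction s using Finset.induction_on with
  | empty => intro α _ j hj; simp at hj
  | insert o s ho ih =>
    intro α h
    have hne : ∀ i j, 1 - (starRingEnd ℂ) (x j) * x i ≠ 0 := fun i j => ne1 (conj_mem (hx j)) (hx i)
    have h0 := h o (Finset.mem_insert_self _ _)
    rw [Finset.sum_insert ho] at h0
    have key : ∀ j ∈ s, α j * ((starRingEnd ℂ) (x j) - (starRingEnd ℂ) (x o)) /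
        (1 - (starRingEnd ℂ) (x j) * x o) = 0 := by
      apply ih
      intro i hi
      have hio : x i - x o ≠ 0 := by
        intro hh
        have := hinj (sub_eq_zero.mp hh)
        exact ho (this ▸ hi)
      have h1 := h i (Finset.mem_insert_of_mem hi)
      rw [Finset.sum_insert ho] at h1
      have e : ∑ j ∈ s, α j * ((starRingEnd ℂ) (x j) - (starRingEnd ℂ) (x o)) /
          (1 - (starRingEnd ℂ) (x j) * x o) / (1 - (starRingEnd ℂ) (x j) * x i)
          = (1 - (starRingEnd ℂ) (x o) * x i) / (x i - x o) *
            ∑ j ∈ s, α j / (1 - (starRingEnd ℂ) (x j) * x i)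
          - (1 - (starRingEnd ℂ) (x o) * x o) / (x i - x o) *
            ∑ j ∈ s, α j / (1 - (starRingEnd ℂ) (x j) * x o) := by
        rw [Finset.mul_sum, Finset.mul_sum, ← Finset.sum_sub_distrib]
        refine Finset.sum_congr rfl fun j _ => ?_
        have a1 := hne i j
        have a2 := hne o j
        field_simp
        ring
      rw [e, eq_neg_of_add_eq_zero_right h1, eq_neg_of_add_eq_zero_right h0]
      have a1 := hne i o
      have a2 := hne o o
      field_simp
      ring
    have hz : ∀ j ∈ s, α j = 0 := by
      intro j hj
      have hjo : (starRingEnd ℂ) (x j) - (starRingEnd ℂ) (x o) ≠ 0 := by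
        rw [← map_sub]
        intro hh
        have := hinj (sub_eq_zero.mp ((map_eq_zero _).mp hh))
        exact ho (this ▸ hj)
      have := key j hj
      rw [div_eq_zero_iff, or_iff_left (hne o j), mul_eq_zero, or_iff_left hjo] at this
      exact this
    intro j hj
    rcases Finset.mem_insert.mp hj with rfl | hj
    · rw [Finset.sum_eq_zero (fun i hi => by rw [hz i hi, zero_div]), add_zero,
        div_eq_zero_iff, or_iff_left (hne j j)] at h0
      exact h0
    · exact hz j hj

lemma scal1 (a c ζ z : ℂ) (n1 : 1 - ζ * z ≠ 0) (n2 : 1 - a * ζ ≠ 0) (n3 : 1 - c * z ≠ 0) :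
    (1 - (c - ζ) / (1 - a * ζ) * ((a - z) / (1 - c * z))) / (1 - ζ * z)
      = (1 - c * a) / (1 - a * ζ) / (1 - c * z) := by
  rw [div_mul_div_comm, one_sub_div (mul_ne_zero n2 n3), div_div, div_div,
    div_eq_div_iff (mul_ne_zero (mul_ne_zero n2 n3) n1) (mul_ne_zero n2 n3)]
  ring

lemma scal2 (a c d z b t : ℂ) (n3 : 1 - c * z ≠ 0) (n4 : 1 - d * z ≠ 0) (n5 : c - d ≠ 0) :
    b * ((a - z) / (1 - c * z)) * (t / (1 - d * z))
      = b * (t * ((a * c - 1) / (c - d))) / (1 - c * z)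
        + b * t * ((1 - a * d) / (c - d)) / (1 - d * z) := by
  have : b * (t * ((a * c - 1) / (c - d))) / (1 - c * z)
        + b * t * ((1 - a * d) / (c - d)) / (1 - d * z)
      = b * t * ((a * c - 1) * (1 - d * z) + (1 - a * d) * (1 - c * z)) /
        ((c - d) * ((1 - c * z) * (1 - d * z))) := by
    rw [eq_div_iff (mul_ne_zero n5 (mul_ne_zero n3 n4)), add_mul]
    generalize hp : 1 - c * z = p at *
    generalize hq : 1 - d * z = q at *
    generalize hr : c - d = r at *
    field_simp
  rw [this, eq_div_iff (mul_ne_zero n5 (mul_ne_zero n3 n4))]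
  have h2 : b * ((a - z) / (1 - c * z)) * (t / (1 - d * z)) *
      ((c - d) * ((1 - c * z) * (1 - d * z))) = b * (a - z) * t * (c - d) := by
    generalize hp : 1 - c * z = p at *
    generalize hq : 1 - d * z = q at *
    field_simp
  rw [h2]
  ring

lemma kernel_aux {m : ℕ} (x : Fin m → ℂ) (hx : ∀ j, x j ∈ unitDisk)
    (hinj : Function.Injective x) (ζ : ℂ) (hζ : ζ ∈ unitDisk) (s : Finset (Fin m)) :
    ∃ α : Fin m → ℂ, ∀ z ∈ unitDisk,
      (1 - (∏ j ∈ s, mobius ((starRingEnd ℂ) (x j)) ζ) * ∏ j ∈ s, mobius (x j) z) / (1 - ζ * z)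
        = ∑ j ∈ s, α j / (1 - (starRingEnd ℂ) (x j) * z) := by
  induction s using Finset.induction_on with
  | empty => exact ⟨0, by simp⟩
  | insert o s ho ih =>
    obtain ⟨α, hα⟩ := ih
    set b := mobius ((starRingEnd ℂ) (x o)) ζ with hb
    set A : Fin m → ℂ := fun j => (x o * (starRingEnd ℂ) (x o) - 1) /
      ((starRingEnd ℂ) (x o) - (starRingEnd ℂ) (x j)) with hA
    -- z_o - z = C (1 - w_o z) + A (1 - w_j z)
    set C : Fin m → ℂ := fun j => (1 - x o * (starRingEnd ℂ) (x j)) /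
      ((starRingEnd ℂ) (x o) - (starRingEnd ℂ) (x j)) with hC
    refine ⟨fun j => if j = o then
        (1 - (starRingEnd ℂ) (x o) * x o) / (1 - x o * ζ)
          + b * ∑ j ∈ s, α j * A j
        else b * α j * C j, ?_⟩
    intro z hz
    have h := hα z hz
    have n1 := ne1 hζ hz
    have n2 := ne1 (hx o) hζ
    have n3 := ne1 (conj_mem (hx o)) hz
    rw [Finset.prod_insert ho, Finset.prod_insert ho, Finset.sum_insert ho]
    set P := ∏ j ∈ s, mobius ((starRingEnd ℂ) (x j)) ζ
    set Q := ∏ j ∈ s, mobius (x j) z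
    have e1 : (1 - b * P * (mobius (x o) z * Q)) / (1 - ζ * z)
        = (1 - b * mobius (x o) z) / (1 - ζ * z)
          + b * mobius (x o) z * ((1 - P * Q) / (1 - ζ * z)) := by
      field_simp; ring
    have e2 : (1 - b * mobius (x o) z) / (1 - ζ * z)
        = (1 - (starRingEnd ℂ) (x o) * x o) / (1 - x o * ζ) / (1 - (starRingEnd ℂ) (x o) * z) := by
      rw [hb, mobius, mobius, Complex.conj_conj]
      exact scal1 _ _ _ _ n1 n2 n3
    rw [← hb, e1, e2, h, Finset.mul_sum]
    have e3 : ∑ j ∈ s, b * mobius (x o) z * (α j / (1 - (starRingEnd ℂ) (x j) * z))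
        = ∑ j ∈ s, (b * (α j * A j) / (1 - (starRingEnd ℂ) (x o) * z)
            + b * α j * C j / (1 - (starRingEnd ℂ) (x j) * z)) := by
      refine Finset.sum_congr rfl fun j hj => ?_
      have n4 := ne1 (conj_mem (hx j)) hz
      have n5 : (starRingEnd ℂ) (x o) - (starRingEnd ℂ) (x j) ≠ 0 := by
        rw [← map_sub]
        intro hh
        have := hinj (sub_eq_zero.mp ((map_eq_zero _).mp hh))
        exact ho (this ▸ hj)
      simp only [hA, hC, mobius]
      exact scal2 _ _ _ _ _ _ n3 n4 n5
    beta_reduce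
    rw [e3, Finset.sum_add_distrib, if_pos rfl]
    have e4 : ∑ j ∈ s, (if j = o then
        (1 - (starRingEnd ℂ) (x o) * x o) / (1 - x o * ζ)
          + b * ∑ j ∈ s, α j * A j
        else b * α j * C j) / (1 - (starRingEnd ℂ) (x j) * z)
        = ∑ j ∈ s, b * α j * C j / (1 - (starRingEnd ℂ) (x j) * z) := by
      refine Finset.sum_congr rfl fun j hj => ?_
      rw [if_neg (fun hh : j = o => ho (hh ▸ hj))]
    rw [e4, ← Finset.sum_div, ← Finset.mul_sum]
    ring

lemma beta_succ (w : ℕ → ℝ) (k : ℕ) : betaSeq w (k + 1) = betaSeq w k * w (k + 1) := by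
  unfold betaSeq
  rw [Finset.prod_Icc_succ_top (by omega)]

lemma beta_pos (w : ℕ → ℝ) (hpos : ∀ k, 1 ≤ k → 0 < w k) (k : ℕ) : 0 < betaSeq w k := by
  unfold betaSeq
  exact Finset.prod_pos fun j hj => hpos j (Finset.mem_Icc.mp hj).1

lemma summ_beta (w : ℕ → ℝ) (hpos : ∀ k, 1 ≤ k → 0 < w k) (hlim : Tendsto w atTop (nhds 1))
    (r : ℝ) (h0 : 0 ≤ r) (h1 : r < 1) : Summable (fun k => betaSeq w k * r ^ k) := by
  rcases h0.eq_or_lt with rfl | h0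
  · exact summable_of_ne_finset_zero (s := {0}) (by
      intro b hb
      have : b ≠ 0 := by simpa using hb
      simp [this])
  refine summable_of_ratio_test_tendsto_lt_one h1 (Eventually.of_forall fun n =>
    (mul_pos (beta_pos w hpos n) (pow_pos h0 n)).ne') ?_
  have : Tendsto (fun n => w (n + 1) * r) atTop (nhds (1 * r)) :=
    ((tendsto_add_atTop_iff_nat 1).mpr hlim).mul_const r
  rw [one_mul] at this
  refine this.congr fun n => ?_
  have hb := beta_pos w hpos n
  have hw := hpos (n + 1) (by omega)
  rw [beta_succ, Real.norm_of_nonneg (by positivity), Real.norm_of_nonneg (by positivity)]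
  field_simp
  ring

lemma summ_inv_beta (w : ℕ → ℝ) (hpos : ∀ k, 1 ≤ k → 0 < w k) (hlim : Tendsto w atTop (nhds 1))
    (r : ℝ) (h0 : 0 ≤ r) (h1 : r < 1) : Summable (fun k => (betaSeq w k)⁻¹ * r ^ k) := by
  have h := summ_beta (fun k => (w k)⁻¹) (fun k hk => inv_pos.mpr (hpos k hk))
    (by simpa using hlim.inv₀ one_ne_zero) r h0 h1
  refine h.congr fun k => ?_
  simp [betaSeq]

lemma summ_rep (w : ℕ → ℝ) (hpos : ∀ k, 1 ≤ k → 0 < w k) (hlim : Tendsto w atTop (nhds 1))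
    (a : H2) (r : ℝ) (h0 : 0 ≤ r) (h1 : r < 1) :
    Summable (fun k => ‖a k / (betaSeq w k : ℂ)‖ * r ^ k) := by
  refine Summable.of_nonneg_of_le (fun k => by positivity) (fun k => ?_)
    ((summ_inv_beta w hpos hlim r h0 h1).mul_left ‖a‖)
  have hb := beta_pos w hpos k
  rw [norm_div, Complex.norm_real, Real.norm_of_nonneg hb.le, div_eq_mul_inv, mul_assoc]
  have := lp.norm_apply_le_norm (by norm_num) a k
  gcongr

lemma summ_rep' (w : ℕ → ℝ) (hpos : ∀ k, 1 ≤ k → 0 < w k) (hlim : Tendsto w atTop (nhds 1))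
    (a : H2) (z : ℂ) (hz : z ∈ unitDisk) :
    Summable (fun k => (a k / (betaSeq w k : ℂ)) * z ^ k) := by
  have hz' : ‖z‖ < 1 := by simpa [unitDisk] using hz
  refine Summable.of_norm ?_
  simpa [norm_mul, norm_pow] using summ_rep w hpos hlim a ‖z‖ (norm_nonneg z) hz'

lemma ev_exists (w : ℕ → ℝ) (hpos : ∀ k, 1 ≤ k → 0 < w k) (hlim : Tendsto w atTop (nhds 1))
    (z : ℂ) (hz : z ∈ unitDisk) : ∃ L : H2 →ₗ[ℂ] ℂ, ∀ a, L a = repFun (betaSeq w) a z := by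
  refine ⟨{ toFun := fun a => repFun (betaSeq w) a z, map_add' := ?_, map_smul' := ?_ },
    fun a => rfl⟩
  · intro a b
    unfold repFun
    rw [← (summ_rep' w hpos hlim a z hz).tsum_add (summ_rep' w hpos hlim b z hz)]
    refine tsum_congr fun k => ?_
    rw [lp.coeFn_add, Pi.add_apply]; ring
  · intro t a
    unfold repFun
    rw [RingHom.id_apply, smul_eq_mul, ← tsum_mul_left]
    refine tsum_congr fun k => ?_
    rw [lp.coeFn_smul, Pi.smul_apply, smul_eq_mul]; ring

lemma rep_inj (w : ℕ → ℝ) (hpos : ∀ k, 1 ≤ k → 0 < w k) (hlim : Tendsto w atTop (nhds 1))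
    (a : H2) (h : ∃ᶠ z in 𝓝[≠] (0:ℂ), repFun (betaSeq w) a z = 0) : a = 0 := by
  have := ps_zero (fun k => a k / (betaSeq w k : ℂ)) (summ_rep w hpos hlim a) 0
    (by simp [unitDisk]) h
  ext k
  have hk := this k
  have hb : (betaSeq w k : ℂ) ≠ 0 := by exact_mod_cast (beta_pos w hpos k).ne'
  rw [div_eq_zero_iff, or_iff_left hb] at hk
  simpa using hk

lemma rep_ext (w : ℕ → ℝ) (hpos : ∀ k, 1 ≤ k → 0 < w k) (hlim : Tendsto w atTop (nhds 1))
    (a b : H2) (h : ∀ z ∈ unitDisk, repFun (betaSeq w) a z = repFun (betaSeq w) b z) : a = b := by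
  rw [← sub_eq_zero]
  apply rep_inj w hpos hlim
  refine Eventually.frequently ?_
  have : ∀ᶠ z in 𝓝[≠] (0:ℂ), z ∈ unitDisk :=
    nhdsWithin_le_nhds (Metric.ball_mem_nhds (0:ℂ) one_pos)
  filter_upwards [this] with z hz
  obtain ⟨L, hL⟩ := ev_exists w hpos hlim z hz
  rw [← hL, map_sub, hL, hL, h z hz, sub_self]

/-- kernel vector -/
lemma kern_exists (w : ℕ → ℝ) (hpos : ∀ k, 1 ≤ k → 0 < w k) (hlim : Tendsto w atTop (nhds 1))
    (ζ : ℂ) (hζ : ζ ∈ unitDisk) : ∃ κ : H2, (∀ k, κ k = (betaSeq w k : ℂ) * ζ ^ k) ∧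
      ∀ z ∈ unitDisk, repFun (betaSeq w) κ z = 1 / (1 - ζ * z) := by
  have hz' : ‖ζ‖ < 1 := by simpa [unitDisk] using hζ
  have hm : Memℓp (fun k => (betaSeq w k : ℂ) * ζ ^ k) 2 := by
    have h1 : Memℓp (fun k => (betaSeq w k : ℂ) * ζ ^ k) 1 := by
      rw [memℓp_gen_iff (by norm_num)]
      refine (summ_beta w hpos hlim ‖ζ‖ (norm_nonneg _) hz').congr fun k => ?_
      simp [abs_of_pos (beta_pos w hpos k)]
    exact h1.of_exponent_ge (by norm_num)
  refine ⟨⟨_, hm⟩, fun k => rfl, fun z hz => ?_⟩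
  unfold repFun
  have hz1 : ‖z‖ < 1 := by simpa [unitDisk] using hz
  rw [one_div, ← tsum_geometric_of_norm_lt_one]
  · refine tsum_congr fun k => ?_
    have hb : (betaSeq w k : ℂ) ≠ 0 := by exact_mod_cast (beta_pos w hpos k).ne'
    change (betaSeq w k : ℂ) * ζ ^ k / (betaSeq w k : ℂ) * z ^ k = _
    rw [mul_div_cancel_left₀ _ hb, mul_pow]
  · rw [norm_mul]; nlinarith [norm_nonneg ζ, norm_nonneg z]

lemma shift_mem (a : H2) (b : ℕ → ℂ) (p : ℕ) (C : ℝ)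
    (h1 : ∀ k, ‖b (k + p)‖ ≤ C * ‖a k‖) : Memℓp b 2 := by
  have ha := lp.memℓp a
  rw [memℓp_gen_iff (by norm_num)] at ha ⊢
  rw [← summable_nat_add_iff p]
  refine Summable.of_nonneg_of_le (fun k => by positivity) (fun k => ?_) (ha.mul_left (C ^ 2))
  have := h1 k
  simp only [ENNReal.toReal_ofNat, Real.rpow_ofNat]
  calc ‖b (k + p)‖ ^ 2 ≤ (C * ‖a k‖) ^ 2 := by gcongr
    _ = _ := by ring

lemma shift_norm (a b : H2) (p : ℕ) (C : ℝ) (hC : 0 ≤ C) (h0 : ∀ k < p, b k = 0)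
    (h1 : ∀ k, ‖b (k + p)‖ ≤ C * ‖a k‖) : ‖b‖ ≤ C * ‖a‖ := by
  have ha := lp.memℓp a
  have hb := lp.memℓp b
  have hn := lp.norm_rpow_eq_tsum (p := 2) (by norm_num) a
  rw [memℓp_gen_iff (by norm_num)] at ha hb
  refine lp.norm_le_of_tsum_le (p := 2) (by norm_num) (by positivity) ?_
  simp only [ENNReal.toReal_ofNat, Real.rpow_ofNat] at *
  rw [mul_pow, hn, ← tsum_mul_left, ← hb.sum_add_tsum_nat_add p,
    Finset.sum_eq_zero (fun i hi => by rw [h0 i (Finset.mem_range.mp hi)]; simp), zero_add]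
  refine Summable.tsum_le_tsum (fun k => ?_) ((summable_nat_add_iff p).mpr hb) (ha.mul_left _)
  calc ‖b (k + p)‖ ^ 2 ≤ (C * ‖a k‖) ^ 2 := by have := h1 k; gcongr
    _ = _ := by ring

def shiftFun (w : ℕ → ℝ) (a : ℕ → ℂ) : ℕ → ℂ
  | 0 => 0
  | k + 1 => (w (k + 1) : ℂ) * a k

lemma shift_exists (w : ℕ → ℝ) (M : ℝ) (hM : 0 ≤ M) (hw : ∀ k, |w (k + 1)| ≤ M) :
    ∃ S : H2 →L[ℂ] H2, ∀ a : H2, (S a) 0 = 0 ∧ ∀ k, (S a) (k + 1) = (w (k + 1) : ℂ) * a k := by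
  have hb : ∀ a : H2, ∀ k, ‖shiftFun w a (k + 1)‖ ≤ M * ‖a k‖ := by
    intro a k
    simp only [shiftFun, norm_mul, Complex.norm_real, Real.norm_eq_abs]
    have := hw k
    gcongr
  let S0 : H2 →ₗ[ℂ] H2 :=
    { toFun := fun a => ⟨shiftFun w a, shift_mem a _ 1 M (hb a)⟩
      map_add' := by
        intro a b
        ext k
        rcases k with _ | k
        · change (0:ℂ) = 0 + 0; simp
        · change (w (k + 1) : ℂ) * (a k + b k) = w (k + 1) * a k + w (k + 1) * b k; ring
      map_smul' := by
        intro t a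
        ext k
        rcases k with _ | k
        · change (0:ℂ) = t * 0; simp
        · change (w (k + 1) : ℂ) * (t * a k) = t * (w (k + 1) * a k); ring }
  refine ⟨S0.mkContinuous M fun a => ?_, fun a => ⟨rfl, fun k => rfl⟩⟩
  exact shift_norm a (S0 a) 1 M hM (fun k hk => by
    obtain rfl : k = 0 := by omega
    rfl) (hb a)

lemma prod_bound (w : ℕ → ℝ) (hpos : ∀ k, 1 ≤ k → 0 < w k) (hlim : Tendsto w atTop (nhds 1))
    (q : ℝ) (hq : 1 < q) : ∃ C : ℝ, 0 < C ∧ ∀ p k,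
      ∏ i ∈ Finset.range p, w (k + i + 1) ≤ C * q ^ p := by
  obtain ⟨K, hK⟩ := eventually_atTop.mp (hlim.eventually (eventually_le_nhds hq))
  -- C = ∏_{j<K} max 1 (w (j+1)); inductively the product is bounded by a partial such product
  refine ⟨∏ j ∈ Finset.range K, max 1 (w (j + 1)), Finset.prod_pos fun j _ => by positivity, ?_⟩
  intro p k
  have h1 : ∀ n, w (n + 1) ≤ (if n < K then max 1 (w (n + 1)) else 1) * q := by
    intro n
    split_ifs with h
    · have : w (n + 1) ≤ max 1 (w (n + 1)) := le_max_right _ _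
      have h2 : (1:ℝ) ≤ max 1 (w (n + 1)) := le_max_left _ _
      nlinarith
    · rw [one_mul]; exact hK _ (by omega)
  calc ∏ i ∈ Finset.range p, w (k + i + 1)
      ≤ ∏ i ∈ Finset.range p, ((if k + i < K then max 1 (w (k + i + 1)) else 1) * q) :=
        Finset.prod_le_prod (fun i _ => (hpos _ (by omega)).le) (fun i _ => h1 (k + i))
    _ = (∏ i ∈ Finset.range p, (if k + i < K then max 1 (w (k + i + 1)) else 1)) * q ^ p := by
        rw [Finset.prod_mul_distrib]; simp
    _ ≤ _ := by
        gcongr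
        have e : ∏ i ∈ Finset.range p, (if k + i < K then max 1 (w (k + i + 1)) else 1)
            = ∏ j ∈ ((Finset.range p).map (addLeftEmbedding k)).filter (· < K),
                max 1 (w (j + 1)) := by
          rw [Finset.prod_filter, Finset.prod_map]; rfl
        rw [e]
        refine Finset.prod_le_prod_of_subset_of_one_le ?_ ?_ ?_
        · intro j hj
          exact Finset.mem_range.mpr (Finset.mem_filter.mp hj).2
        · intro j _; positivity
        · intro j _ _; exact le_max_left _ _

lemma shift_pow (w : ℕ → ℝ) (S : H2 →L[ℂ] H2)
    (hS : ∀ a : H2, (S a) 0 = 0 ∧ ∀ k, (S a) (k + 1) = (w (k + 1) : ℂ) * a k) (a : H2) (p : ℕ) :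
    (∀ k < p, ((S ^ p) a) k = 0) ∧
      ∀ k, ((S ^ p) a) (k + p) = ((∏ i ∈ Finset.range p, w (k + i + 1) : ℝ) : ℂ) * a k := by
  induction p with
  | zero => simp
  | succ p ih =>
    have e : (S ^ (p + 1)) a = S ((S ^ p) a) := by rw [pow_succ']; rfl
    rw [e]
    constructor
    · intro k hk
      rcases k with _ | k
      · exact (hS _).1
      · rw [(hS _).2, ih.1 k (by omega), mul_zero]
    · intro k
      rw [← add_assoc, (hS _).2, ih.2, Finset.prod_range_succ]
      push_cast
      ring

lemma ops_exist (w : ℕ → ℝ) (hpos : ∀ k, 1 ≤ k → 0 < w k) (hlim : Tendsto w atTop (nhds 1)) :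
    ∃ S : H2 →L[ℂ] H2, RepMul (betaSeq w) (fun z => z) S ∧ ∀ ζ ∈ unitDisk, IsUnit (1 - ζ • S) := by
  obtain ⟨M, hM0, hM⟩ := prod_bound w hpos hlim 2 (by norm_num)
  obtain ⟨S, hS⟩ := shift_exists w (M * 2) (by positivity) (fun k => by
    rw [abs_of_pos (hpos _ (by omega))]
    simpa using hM 1 k)
  refine ⟨S, ?_, ?_⟩
  · intro a z hz
    unfold repFun
    rw [(summ_rep' w hpos hlim (S a) z hz).tsum_eq_zero_add, (hS a).1, ← tsum_mul_left]
    simp only [zero_div, zero_mul, zero_add]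
    refine tsum_congr fun k => ?_
    rw [(hS a).2, beta_succ]
    have hb : (betaSeq w k : ℂ) ≠ 0 := by exact_mod_cast (beta_pos w hpos k).ne'
    have hw : (w (k + 1) : ℂ) ≠ 0 := by exact_mod_cast (hpos (k + 1) (by omega)).ne'
    push_cast
    field_simp
    ring
  · intro ζ hζ
    have hz' : ‖ζ‖ < 1 := by simpa [unitDisk] using hζ
    obtain ⟨q, hq1, hq2⟩ : ∃ q : ℝ, 1 < q ∧ ‖ζ‖ * q < 1 := by
      rcases (norm_nonneg ζ).eq_or_lt with h | h
      · exact ⟨2, by norm_num, by rw [← h]; norm_num⟩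
      · obtain ⟨q, h1, h2⟩ := exists_between ((one_lt_inv₀ h).mpr hz')
        refine ⟨q, h1, ?_⟩
        calc ‖ζ‖ * q < ‖ζ‖ * ‖ζ‖⁻¹ := by gcongr
          _ = 1 := mul_inv_cancel₀ h.ne'
    obtain ⟨C, hC0, hC⟩ := prod_bound w hpos hlim q hq1
    have hn : ∀ p, ‖S ^ p‖ ≤ C * q ^ p := by
      intro p
      refine ContinuousLinearMap.opNorm_le_bound _ (by positivity) fun a => ?_
      obtain ⟨h1, h2⟩ := shift_pow w S hS a p
      refine shift_norm a _ p _ (by positivity) h1 fun k => ?_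
      rw [h2, norm_mul, Complex.norm_real, Real.norm_of_nonneg
        (Finset.prod_nonneg fun i _ => (hpos _ (by omega)).le)]
      have := hC p k
      gcongr
    have ht : Tendsto (fun p => C * (‖ζ‖ * q) ^ p) atTop (nhds (C * 0)) :=
      (tendsto_pow_atTop_nhds_zero_of_lt_one (by positivity) hq2).const_mul C
    rw [mul_zero] at ht
    obtain ⟨p, hp⟩ := (ht.eventually (eventually_lt_nhds one_pos)).exists
    have hx : ‖(ζ • S) ^ p‖ < 1 := by
      refine lt_of_le_of_lt ?_ hp
      rw [smul_pow, norm_smul, norm_pow, mul_pow]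
      nlinarith [hn p, pow_nonneg (norm_nonneg ζ) p]
    have hu := isUnit_one_sub_of_norm_lt_one hx
    rw [← mul_neg_geom_sum] at hu
    refine ((Commute.isUnit_mul_iff ?_).mp hu).1
    refine Commute.sum_right _ _ _ fun i _ => ?_
    exact (Commute.one_left _).sub_left (Commute.self_pow _ _)

lemma blaschke_op (w : ℕ → ℝ) (hpos : ∀ k, 1 ≤ k → 0 < w k) (hlim : Tendsto w atTop (nhds 1))
    {m : ℕ} (x : Fin m → ℂ) (hx : ∀ j, x j ∈ unitDisk) (s : Finset (Fin m)) :
    ∃ T : H2 →L[ℂ] H2, RepMul (betaSeq w) (fun z => ∏ j ∈ s, mobius (x j) z) T := by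
  obtain ⟨S, hS, hU⟩ := ops_exist w hpos hlim
  induction s using Finset.induction_on with
  | empty => exact ⟨1, fun a z _ => by simp⟩
  | insert o s ho ih =>
    obtain ⟨T, hT⟩ := ih
    obtain ⟨u, hu⟩ := hU _ (conj_mem (hx o))
    set R : H2 →L[ℂ] H2 := ↑u⁻¹ with hR
    have hinv : ∀ a, R a - (starRingEnd ℂ) (x o) • S (R a) = a := by
      intro a
      have : (1 - (starRingEnd ℂ) (x o) • S) * R = 1 := by rw [← hu, hR]; exact u.mul_inv
      simpa using congrArg (fun A : H2 →L[ℂ] H2 => A a) this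
    refine ⟨(x o • (1 : H2 →L[ℂ] H2) - S) * R * T, fun a z hz => ?_⟩
    obtain ⟨L, hL⟩ := ev_exists w hpos hlim z hz
    have h1 := congrArg L (hinv (T a))
    rw [map_sub, map_smul, hL, hL, hL, hS _ z hz, hT a z hz, smul_eq_mul] at h1
    have e : ((x o • (1 : H2 →L[ℂ] H2) - S) * R * T) a = x o • R (T a) - S (R (T a)) := by
      simp
    beta_reduce at *
    rw [e, ← hL, map_sub, map_smul, hL, hL, hS _ z hz, smul_eq_mul, Finset.prod_insert ho, mul_assoc,
      ← h1, mobius]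
    have n := ne1 (conj_mem (hx o)) hz
    rw [div_mul_eq_mul_div, eq_div_iff n]
    ring

lemma neumann_mem (A : H2 →L[ℂ] H2) (N : Submodule ℂ H2) (hN : IsClosed (N : Set H2))
    (hA : ∀ v ∈ N, A v ∈ N) (b : ℂ) (hb : ‖b‖ * ‖A‖ < 1) (v : H2) (hv : v - b • A v ∈ N) :
    v ∈ N := by
  have h1 : ∀ n : ℕ, v - ((b • A) ^ n) v ∈ N := by
    intro n
    induction n with
    | zero => simp
    | succ n ih =>
      have e : v - ((b • A) ^ (n + 1)) v = (v - b • A v) + b • A (v - ((b • A) ^ n) v) := by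
        rw [pow_succ']
        simp [smul_sub]
      rw [e]
      exact N.add_mem hv (N.smul_mem _ (hA _ ih))
  have h2 : Tendsto (fun n : ℕ => (b • A) ^ n) atTop (nhds 0) :=
    tendsto_pow_atTop_nhds_zero_of_norm_lt_one (by rwa [norm_smul])
  have h3 : Tendsto (fun n : ℕ => v - ((b • A) ^ n) v) atTop (nhds v) := by
    have : Tendsto (fun n : ℕ => ((b • A) ^ n) v) atTop (nhds ((0 : H2 →L[ℂ] H2) v)) :=
      ((ContinuousLinearMap.apply ℂ H2 v).continuous.tendsto 0).comp h2
    simpa using (tendsto_const_nhds (x := v)).sub this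
  exact hN.mem_of_tendsto h3 (Eventually.of_forall h1)

lemma indep_aux {m : ℕ} (A : H2 →L[ℂ] H2) (κ : Fin m → H2) (hAinj : ∀ v, A v = 0 → v = 0)
    (h0 : ∀ (α : Fin m → ℂ) (v : H2), ∑ j, α j • κ j + A v = 0 → ∀ j, α j = 0) (N : ℕ) :
    ∀ α : Fin m → ℕ → ℂ, ∑ n ∈ Finset.range N, ∑ j, α j n • (A ^ n) (κ j) = 0 →
      ∀ n < N, ∀ j, α j n = 0 := by
  induction N with
  | zero => intro α _ n hn; omega
  | succ N ih =>
    intro α h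
    rw [Finset.sum_range_succ'] at h
    have e : ∑ n ∈ Finset.range N, ∑ j, α j (n + 1) • (A ^ (n + 1)) (κ j)
        = A (∑ n ∈ Finset.range N, ∑ j, α j (n + 1) • (A ^ n) (κ j)) := by
      simp only [map_sum, map_smul]
      refine Finset.sum_congr rfl fun n _ => Finset.sum_congr rfl fun j _ => ?_
      rw [pow_succ']; rfl
    have h1 : ∑ j, α j 0 • κ j + A (∑ n ∈ Finset.range N, ∑ j, α j (n + 1) • (A ^ n) (κ j)) = 0 := by
      rw [← e, add_comm]; simpa using h
    have h2 := h0 _ _ h1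
    rw [Finset.sum_eq_zero (fun j _ => by rw [h2 j, zero_smul]), zero_add] at h1
    have h3 := hAinj _ h1
    have h4 := ih (fun j n => α j (n + 1)) h3
    intro n hn j
    rcases n with _ | n
    · exact h2 j
    · exact h4 n (by omega) j

/-- Let `H²_β` come from a weight sequence `w_k → 1` and let
`B(z) = ∏_{j=1}^m (z_j - z)/(1 - conj z_j · z)` be a Blaschke product with `m`
distinct zeros.  Then the family `{B^n(z)/(1 - conj z_j · z)}` is total and
finitely linearly independent in `H²_β`. -/
theorem statement8 (w : ℕ → ℝ) (hpos : ∀ k, 1 ≤ k → 0 < w k)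
    (hlim : Tendsto w atTop (nhds 1)) (m : ℕ) (hm : 0 < m)
    (zs : Fin m → ℂ) (hzs : ∀ j, zs j ∈ unitDisk) (hinj : Function.Injective zs)
    (B : ℂ → ℂ) (hB : ∀ z, B z = ∏ j, mobius (zs j) z) :
    ∃ c : Fin m × ℕ → H2,
      (∀ (j : Fin m) (n : ℕ), ∀ z ∈ unitDisk,
        repFun (betaSeq w) (c (j, n)) z = B z ^ n / (1 - (starRingEnd ℂ) (zs j) * z)) ∧
      (Submodule.span ℂ (Set.range c)).topologicalClosure = ⊤ ∧
      LinearIndependent ℂ c := by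
  choose! K hK1 hK2 using kern_exists w hpos hlim
  obtain ⟨A, hA⟩ := blaschke_op w hpos hlim zs hzs Finset.univ
  have hA' : ∀ a : H2, ∀ z ∈ unitDisk, repFun (betaSeq w) (A a) z = B z * repFun (betaSeq w) a z := by
    intro a z hz
    rw [hA a z hz, hB]
  have hAn : ∀ n : ℕ, ∀ a : H2, ∀ z ∈ unitDisk,
      repFun (betaSeq w) ((A ^ n) a) z = B z ^ n * repFun (betaSeq w) a z := by
    intro n
    induction n with
    | zero => intro a z _; simp
    | succ n ih =>
      intro a z hz
      have e : (A ^ (n + 1)) a = A ((A ^ n) a) := by rw [pow_succ']; rfl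
      rw [e, hA' _ z hz, ih a z hz]; ring
  have hBz : ∀ i, B (zs i) = 0 := by
    intro i
    rw [hB]
    exact Finset.prod_eq_zero (Finset.mem_univ i) (by simp [mobius])
  set κ : Fin m → H2 := fun j => K ((starRingEnd ℂ) (zs j)) with hκ
  have hκr : ∀ j, ∀ z ∈ unitDisk,
      repFun (betaSeq w) (κ j) z = 1 / (1 - (starRingEnd ℂ) (zs j) * z) :=
    fun j z hz => hK2 _ (conj_mem (hzs j)) z hz
  refine ⟨fun q => (A ^ q.2) (κ q.1), ?_, ?_, ?_⟩
  · intro j n z hz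
    rw [hAn n _ z hz, hκr j z hz, mul_one_div]
  · set c : Fin m × ℕ → H2 := fun q => (A ^ q.2) (κ q.1) with hc
    set N := (Submodule.span ℂ (Set.range c)).topologicalClosure with hN
    have hNA : ∀ v ∈ N, A v ∈ N := by
      have hmap : Set.MapsTo A (Submodule.span ℂ (Set.range c) : Set H2)
          (Submodule.span ℂ (Set.range c) : Set H2) := by
        intro v hv
        have : Submodule.map (A : H2 →ₗ[ℂ] H2) (Submodule.span ℂ (Set.range c))
            ≤ Submodule.span ℂ (Set.range c) := by
          rw [Submodule.map_span_le]
          rintro _ ⟨⟨j, n⟩, rfl⟩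
          refine Submodule.subset_span ⟨(j, n + 1), ?_⟩
          simp only [hc]
          rw [pow_succ']; rfl
        exact this (Submodule.mem_map_of_mem hv)
      intro v hv
      exact hmap.closure A.continuous hv
    have hκN : ∀ j, κ j ∈ N := fun j =>
      Submodule.le_topologicalClosure _ (Submodule.subset_span ⟨(j, 0), by simp [hc]⟩)
    have hKN : ∀ ζ ∈ unitDisk, ‖∏ j, mobius ((starRingEnd ℂ) (zs j)) ζ‖ * ‖A‖ < 1 → K ζ ∈ N := by
      intro ζ hζ hlt
      refine neumann_mem A N (Submodule.isClosed_topologicalClosure _) hNA _ hlt _ ?_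
      obtain ⟨α, hα⟩ := kernel_aux zs hzs hinj ζ hζ Finset.univ
      have e : K ζ - (∏ j, mobius ((starRingEnd ℂ) (zs j)) ζ) • A (K ζ) = ∑ j, α j • κ j := by
        refine rep_ext w hpos hlim _ _ fun z hz => ?_
        obtain ⟨L, hL⟩ := ev_exists w hpos hlim z hz
        rw [← hL, ← hL, map_sub, map_smul, map_sum]
        rw [hL, hL, smul_eq_mul, hA _ z hz, hK2 ζ hζ z hz]
        have h := hα z hz
        have e2 : ∑ j, L (α j • κ j)
            = ∑ j, α j / (1 - (starRingEnd ℂ) (zs j) * z) :=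
          Finset.sum_congr rfl fun j _ => by
            rw [map_smul, hL, smul_eq_mul, hκr j z hz, mul_one_div]
        rw [e2, ← h]
        ring
      rw [e]
      exact N.sum_mem fun j _ => N.smul_mem _ (hκN j)
    rw [hN, Submodule.topologicalClosure_eq_top_iff, Submodule.eq_bot_iff]
    intro y hy
    have hyN : ∀ v ∈ N, inner ℂ y v = 0 := by
      intro v hv
      have : y ∈ Nᗮ := by rw [hN, Submodule.orthogonal_closure]; exact hy
      exact (Submodule.mem_orthogonal' _ _).mp this v hv
    let o : Fin m := ⟨0, hm⟩
    have ho := conj_mem (hzs o)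
    set z0 := (starRingEnd ℂ) (zs o) with hz0
    have hev : ∀ᶠ ζ in 𝓝 z0, ‖∏ j, mobius ((starRingEnd ℂ) (zs j)) ζ‖ * ‖A‖ < 1 := by
      have hcont : ContinuousAt
          (fun ζ => ‖∏ j, mobius ((starRingEnd ℂ) (zs j)) ζ‖ * ‖A‖) z0 := by
        refine ContinuousAt.mul (ContinuousAt.norm ?_) continuousAt_const
        refine tendsto_finsetProd _ fun j _ => ?_
        unfold mobius
        refine ContinuousAt.div (by fun_prop) (by fun_prop) ?_
        rw [Complex.conj_conj]
        exact ne1 (hzs j) ho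
      have hv : ‖∏ j, mobius ((starRingEnd ℂ) (zs j)) z0‖ * ‖A‖ = 0 := by
        rw [Finset.prod_eq_zero (Finset.mem_univ o) (by simp [mobius, hz0])]
        simp
      exact hcont.eventually (by beta_reduce; rw [hv]; exact eventually_lt_nhds one_pos)
    have hdisk : ∀ᶠ ζ in 𝓝 z0, ζ ∈ unitDisk := Metric.isOpen_ball.mem_nhds ho
    have hcoef := ps_zero (fun k => (starRingEnd ℂ) (y k) * (betaSeq w k : ℂ)) ?_ z0 ho ?_
    · ext k
      have hk := hcoef k
      have hb : (betaSeq w k : ℂ) ≠ 0 := by exact_mod_cast (beta_pos w hpos k).ne'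
      rw [mul_eq_zero, or_iff_left hb, map_eq_zero] at hk
      simpa using hk
    · intro r hr0 hr1
      refine Summable.of_nonneg_of_le (fun k => by positivity) (fun k => ?_)
        ((summ_beta w hpos hlim r hr0 hr1).mul_left ‖y‖)
      have hb := beta_pos w hpos k
      rw [norm_mul, Complex.norm_real, Real.norm_of_nonneg hb.le, RCLike.norm_conj, mul_assoc]
      have := lp.norm_apply_le_norm (by norm_num) y k
      gcongr
    · refine Eventually.frequently (nhdsWithin_le_nhds ?_)
      filter_upwards [hev, hdisk] with ζ h1 h2
      have h3 := hyN _ (hKN ζ h2 h1)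
      rw [lp.inner_eq_tsum] at h3
      rw [← h3]
      refine tsum_congr fun k => ?_
      rw [hK1 ζ h2, RCLike.inner_apply]
      ring
  · have hAinj : ∀ v, A v = 0 → v = 0 := by
      intro v hv
      apply rep_inj w hpos hlim
      refine Eventually.frequently ?_
      have h1 : ∀ᶠ z in 𝓝[≠] (0:ℂ), z ∈ unitDisk :=
        nhdsWithin_le_nhds (Metric.ball_mem_nhds (0:ℂ) one_pos)
      have h2 : ∀ᶠ z in 𝓝[≠] (0:ℂ), ∀ j, z ≠ zs j := by
        rw [eventually_all]
        intro j
        by_cases hj : zs j = 0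
        · rw [hj]; exact self_mem_nhdsWithin
        · exact nhdsWithin_le_nhds (isOpen_ne.mem_nhds (Ne.symm hj))
      filter_upwards [h1, h2] with z hz hne
      have h3 := hA' v z hz
      rw [hv] at h3
      have h4 : repFun (betaSeq w) 0 z = 0 := by simp [repFun]
      rw [h4] at h3
      have h5 : B z ≠ 0 := by
        rw [hB, Finset.prod_ne_zero_iff]
        intro j _
        exact div_ne_zero (sub_ne_zero.mpr (hne j).symm) (ne1 (conj_mem (hzs j)) hz)
      exact (mul_eq_zero.mp h3.symm).resolve_left h5
    have h0 : ∀ (α : Fin m → ℂ) (v : H2), ∑ j, α j • κ j + A v = 0 → ∀ j, α j = 0 := by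
      intro α v h j
      refine cauchy_aux zs hzs hinj Finset.univ α ?_ j (Finset.mem_univ j)
      intro i _
      obtain ⟨L, hL⟩ := ev_exists w hpos hlim (zs i) (hzs i)
      have h1 := congrArg L h
      rw [map_add, map_sum, hL, hA' _ _ (hzs i), hBz, zero_mul, add_zero, map_zero] at h1
      rw [← h1]
      refine Finset.sum_congr rfl fun j _ => ?_
      rw [map_smul, hL, hκr j _ (hzs i), smul_eq_mul, mul_one_div]
    rw [linearIndependent_iff]
    intro l hl
    set N := (l.support.sup Prod.snd) + 1 with hN
    have hsub : l.support ⊆ Finset.univ ×ˢ Finset.range N := by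
      intro q hq
      have : q.2 ≤ l.support.sup Prod.snd := Finset.le_sup (f := Prod.snd) hq
      simp only [Finset.mem_product, Finset.mem_univ, true_and, Finset.mem_range]
      omega
    rw [Finsupp.linearCombination_apply, Finsupp.sum_of_support_subset _ hsub _ (by simp),
      Finset.sum_product_right] at hl
    have key := indep_aux A κ hAinj h0 N (fun j n => l (j, n)) hl
    ext ⟨j, n⟩
    by_cases hn : n < N
    · exact key n hn j
    · by_contra hne
      have := hsub (Finsupp.mem_support_iff.mpr hne)
      simp at this
      omega
end
end
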